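/- arXiv:1208.4755 — 2 statements merged into one kernel-verified Lean document; each statement's English description precedes it below -/
import Mathlib

section
/- Let Ω be a compact metric space such that the Banach space C(Ω, ℝ) is infinite-dimensional and not isomorphic to c₀. Then C(Ω, ℝ) has the ω-SVM property but does not have the ω₁-SVM property; that is, there is a finite constant working for all finite set algebras, but there is no finite constant v such that for every countable set algebra F and every 1-additive ν : F → C(Ω, ℝ) there is a vector measure μ : F → C(Ω, ℝ) with ‖ν(A) − μ(A)‖ ≤ v for all A ∈ F. -/
open Cardinal ENNReal

/-- A set algebra: contains `∅`, closed under complements and finite unions. -/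
def IsSetAlg {Ω : Type*} (F : Set (Set Ω)) : Prop :=
  ∅ ∈ F ∧ (∀ A ∈ F, Aᶜ ∈ F) ∧ ∀ A ∈ F, ∀ B ∈ F, A ∪ B ∈ F

/-- `ν` is 1-additive on the set algebra `F`. -/
def OneAdd {Ω X : Type*} [SeminormedAddCommGroup X] (F : Set (Set Ω)) (ν : Set Ω → X) : Prop :=
  ∀ A ∈ F, ∀ B ∈ F, Disjoint A B → ‖ν (A ∪ B) - ν A - ν B‖ ≤ 1

/-- `μ` is a (finitely additive) vector measure on the set algebra `F`. -/
def VectMeas {Ω X : Type*} [AddCommGroup X] (F : Set (Set Ω)) (μ : Set Ω → X) : Prop :=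
  ∀ A ∈ F, ∀ B ∈ F, Disjoint A B → μ (A ∪ B) = μ A + μ B

/-- `K` is a Kalton–Roberts constant. -/
def IsKRConst (K : ℝ) : Prop :=
  ∀ (Ω : Type) (F : Set (Set Ω)), IsSetAlg F →
    ∀ ν : Set Ω → ℝ, OneAdd F ν →
      ∃ μ : Set Ω → ℝ, VectMeas F μ ∧ ∀ A ∈ F, |ν A - μ A| ≤ K

/-- `X` has the SVM property with constant `v` (arbitrary set algebras). -/
def HasSVMBound (X : Type*) [SeminormedAddCommGroup X] (v : ℝ) : Prop :=
  ∀ (Ω : Type) (F : Set (Set Ω)), IsSetAlg F →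
    ∀ ν : Set Ω → X, OneAdd F ν →
      ∃ μ : Set Ω → X, VectMeas F μ ∧ ∀ A ∈ F, ‖ν A - μ A‖ ≤ v

/-- `X` has the ω-SVM property with constant `v` (finite set algebras). -/
def HasOmegaSVMBound (X : Type*) [SeminormedAddCommGroup X] (v : ℝ) : Prop :=
  ∀ (Ω : Type) (F : Set (Set Ω)), IsSetAlg F → F.Finite →
    ∀ ν : Set Ω → X, OneAdd F ν →
      ∃ μ : Set Ω → X, VectMeas F μ ∧ ∀ A ∈ F, ‖ν A - μ A‖ ≤ v

/-- `X` has the κ-SVM property with constant `v` (set algebras of cardinality `< κ`). -/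
def HasKappaSVMBound (X : Type*) [SeminormedAddCommGroup X] (κ : Cardinal) (v : ℝ) : Prop :=
  ∀ (Ω : Type) (F : Set (Set Ω)), IsSetAlg F → #(↥F) < κ →
    ∀ ν : Set Ω → X, OneAdd F ν →
      ∃ μ : Set Ω → X, VectMeas F μ ∧ ∀ A ∈ F, ‖ν A - μ A‖ ≤ v

/-!
`C(K)` has the `ω`-SVM property. By the Kalton–Roberts theorem
(`IsAlmostAdditive.exists_additive_approx`) each `A ↦ ν A x` is uniformly close to a measure;
finitely many of these measures are glued with a partition of unity of `K`
(`IsAlmostAdditive.exists_continuousMap_additive_approx`), which suffices as a finite algebra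
involves only finitely many functions `ν A`. The Kalton–Roberts theorem itself rests on
concentrators: a sparse bipartite graph (`exists_isConcentrator_prod_bool`) allows many sets of low
overlap to be cut and reassembled into half as many sets at small cost, which bounds the error of a
best affine approximation (`IsAlmostModular.exists_affine_approx`).

`C(K)` fails the `ω₁`-SVM property. If some finite Cantor–Bendixson derivative of `K` is empty,
then `C(K)` is isomorphic to `c₀(Γ)` with `Γ` countable, by repeatedly splitting off the isolated
points (`nonempty_continuousLinearEquiv_of_retraction`); so under the hypotheses all finite
derivatives of `K` are nonempty (`cbDeriv_nonempty`). Hence for each `n` there is a tree of balls in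
`K`, indexed by finite lists of naturals, with siblings disjoint, children inside the half-size ball
of the parent, and centres of children converging to the centre of the parent down to level `n`
(`nonempty_ballTree`). Let `φ s` be a bump function supported in the ball of `s` and equal to `1` on
its half-size ball. For a finite set `A` of nodes let `g A` be half the sum of
`(-1) ^ k φ (k :: s)` over `s ∈ A` and `k` below a cutoff exceeding all entries of members of `A`.
Children beyond the cutoff are disjointly supported, so `g` is `1`-additive; it extends to the
countable algebra of finite and cofinite sets of nodes. A vector measure near `g` is given on
singletons by continuous functions `h t`. Continuity allows one to descend a branch of length `n`
always choosing the parity of the next child against the sign of `h t` (`BallTree.exists_branch`).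
On the part of the branch with a given parity `g` is then larger than the measure by an amount
growing linearly in the number of nodes, and `n` was arbitrary.
-/

/-! ### Concentrators -/

section Concentrator

variable {L R κ : Type*} [Fintype κ]

section Confined

variable [Fintype L] [DecidableEq L] [DecidableEq κ] [Fintype R]

/-- The multigraphs from `L` to `R` with edges labelled by `κ` all of whose edges at `S` end
in `T`. -/
def confinedGraphs (κ : Type*) [Fintype κ] [DecidableEq κ] (S : Finset L) (T : Finset R) :
    Finset (L → κ → R) :=
  Fintype.piFinset fun l => Fintype.piFinset fun _ => if l ∈ S then T else Finset.univ

theorem card_confinedGraphs (S : Finset L) (T : Finset R) :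
    (confinedGraphs κ S T).card = T.card ^ (Fintype.card κ * S.card) *
      Fintype.card R ^ (Fintype.card κ * (Fintype.card L - S.card)) := by
  simp only [confinedGraphs, Fintype.card_piFinset, Finset.prod_const, Finset.card_univ,
    apply_ite Finset.card, ite_pow, Finset.prod_ite, Finset.filter_not, Finset.filter_univ_mem,
    ← Finset.compl_eq_univ_sdiff, Finset.card_compl, pow_mul]

end Confined

variable [DecidableEq R]

/-- The bipartite multigraph from `L` to `R` joining `l` to the points `h l t`, `t : κ`, is a
concentrator with capacity `m` if Hall's condition holds for all sets of at most `m` left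
vertices. -/
def IsConcentrator (h : L → κ → R) (m : ℕ) : Prop :=
  ∀ S : Finset L, S.card ≤ m → S.card ≤ (S.biUnion fun l => Finset.univ.image (h l)).card

theorem IsConcentrator.exists_injOn [Nonempty κ] {h : L → κ → R} {m : ℕ}
    (hh : IsConcentrator h m) {S : Finset L} (hS : S.card ≤ m) :
    ∃ t : L → κ, Set.InjOn (fun l => h l (t l)) S := by
  classical
  have hall (T : Finset S) : T.card ≤ (T.biUnion fun l => Finset.univ.image (h l)).card := by
    have hTS : (T.map (Function.Embedding.subtype _)).card ≤ m :=
      (Finset.card_le_card (Finset.map_subtype_subset T)).trans hS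
    simpa [Finset.map_eq_image, Finset.image_biUnion, Finset.card_image_of_injective _
      Subtype.val_injective] using hh _ hTS
  obtain ⟨e, he_inj, he⟩ := (Finset.all_card_le_biUnion_card_iff_exists_injective _).1 hall
  have hedge (l : S) : ∃ t, h l t = e l := by simpa using he l
  choose t ht using hedge
  refine ⟨fun l => if hl : l ∈ S then t ⟨l, hl⟩ else Classical.arbitrary κ,
    fun l hl l' hl' heq => ?_⟩
  rw [Finset.mem_coe] at hl hl'
  simp only [hl, hl', dif_pos, ht ⟨l, hl⟩, ht ⟨l', hl'⟩] at heq
  exact congrArg Subtype.val (he_inj heq)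

variable [Fintype L] [Fintype R]

theorem exists_mem_confinedGraphs [DecidableEq L] [DecidableEq κ] {h : L → κ → R} {m : ℕ}
    (hm : m ≤ Fintype.card R) (hh : ¬ IsConcentrator h m) :
    ∃ s ∈ Finset.Icc 1 m, ∃ S ∈ Finset.powersetCard s Finset.univ,
      ∃ T ∈ Finset.powersetCard s Finset.univ, h ∈ confinedGraphs κ S T := by
  simp only [IsConcentrator, not_forall, not_le] at hh
  obtain ⟨S, hSm, hlt⟩ := hh
  obtain ⟨T, hsub, hcard⟩ := Finset.exists_superset_card_eq hlt.le (hSm.trans hm)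
  refine ⟨S.card, Finset.mem_Icc.2 ⟨by omega, hSm⟩, S, by simp, T, by simp [hcard], ?_⟩
  simp only [confinedGraphs, Fintype.mem_piFinset]
  intro l t
  split_ifs with hl
  · exact hsub (Finset.mem_biUnion.2 ⟨l, hl, Finset.mem_image_of_mem _ (Finset.mem_univ t)⟩)
  · exact Finset.mem_univ _

theorem exists_isConcentrator_of_sum_lt {m : ℕ} (hm : m ≤ Fintype.card R)
    (hlt : ∑ s ∈ Finset.Icc 1 m, (Fintype.card L).choose s * ((Fintype.card R).choose s *
        (s ^ (Fintype.card κ * s) * Fintype.card R ^ (Fintype.card κ * (Fintype.card L - s)))) <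
      Fintype.card R ^ (Fintype.card κ * Fintype.card L)) :
    ∃ h : L → κ → R, IsConcentrator h m := by
  classical
  by_contra! hnone
  refine hlt.not_ge ?_
  calc Fintype.card R ^ (Fintype.card κ * Fintype.card L)
      = (Finset.univ : Finset (L → κ → R)).card := by simp [pow_mul]
    _ ≤ ((Finset.Icc 1 m).biUnion fun s => (Finset.powersetCard s Finset.univ).biUnion fun S =>
          (Finset.powersetCard s Finset.univ).biUnion fun T => confinedGraphs κ S T).card :=
        Finset.card_le_card fun h _ => by
          simpa only [Finset.mem_biUnion] using exists_mem_confinedGraphs hm (hnone h)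
    _ ≤ _ := Finset.card_biUnion_le.trans <| Finset.sum_le_sum fun s _ => by
        rw [← Finset.card_univ (α := L), ← Finset.card_powersetCard]
        refine Finset.card_biUnion_le_card_mul _ _ _ fun S hS => ?_
        rw [← Finset.card_univ (α := R), ← Finset.card_powersetCard]
        refine Finset.card_biUnion_le_card_mul _ _ _ fun T hT => ?_
        simp only [card_confinedGraphs, (Finset.mem_powersetCard.1 hS).2,
          (Finset.mem_powersetCard.1 hT).2, Finset.card_univ, le_refl]

theorem pow_self_le_three_pow_mul_factorial (s : ℕ) :
    (s : ℝ) ^ s ≤ 3 ^ s * (s.factorial : ℝ) := by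
  rw [← div_le_iff₀ (by positivity)]
  calc (s : ℝ) ^ s / s.factorial ≤ Real.exp s :=
        Real.pow_div_factorial_le_exp _ (Nat.cast_nonneg s) s
    _ = Real.exp 1 ^ s := (Real.exp_one_pow s).symm
    _ ≤ 3 ^ s := pow_le_pow_left₀ (Real.exp_pos 1).le Real.exp_one_lt_three.le s

theorem choose_mul_pow_self_le (n s : ℕ) : (n.choose s : ℝ) * (s : ℝ) ^ s ≤ (3 * n) ^ s :=
  calc (n.choose s : ℝ) * (s : ℝ) ^ s
      ≤ ((n : ℝ) ^ s / s.factorial) * (3 ^ s * s.factorial) :=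
        mul_le_mul (Nat.choose_le_pow_div s n) (pow_self_le_three_pow_mul_factorial s)
          (by positivity) (by positivity)
    _ = (3 * n) ^ s := by rw [mul_pow]; field_simp

theorem concentrator_term_le {n s : ℕ} (hs : s ≤ n / 64) :
    ((2 * n).choose s : ℝ) * (n.choose s * ((s : ℝ) ^ (3 * s) * (n : ℝ) ^ (3 * (2 * n - s))))
      ≤ (9 / 32) ^ s * (n : ℝ) ^ (3 * (2 * n)) := by
  have hs' : (s : ℝ) ≤ n / 64 := by
    rw [le_div_iff₀ (by norm_num)]
    exact_mod_cast (Nat.le_div_iff_mul_le (by norm_num)).1 hs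
  calc ((2 * n).choose s : ℝ) * (n.choose s * ((s : ℝ) ^ (3 * s) * (n : ℝ) ^ (3 * (2 * n - s))))
      = (((2 * n).choose s : ℝ) * (s : ℝ) ^ s) * ((n.choose s) * (s : ℝ) ^ s) * (s : ℝ) ^ s
          * (n : ℝ) ^ (3 * (2 * n - s)) := by ring
    _ ≤ (3 * (2 * n : ℕ)) ^ s * (3 * n) ^ s * (n / 64 : ℝ) ^ s * (n : ℝ) ^ (3 * (2 * n - s)) := by
        gcongr
        exacts [choose_mul_pow_self_le _ s, choose_mul_pow_self_le n s]
    _ = (9 / 32) ^ s * ((n : ℝ) ^ (3 * s) * (n : ℝ) ^ (3 * (2 * n - s))) := by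
        rw [← mul_assoc, pow_mul (n : ℝ) 3 s, ← mul_pow, ← mul_pow, ← mul_pow]
        congr 2
        push_cast
        ring
    _ = (9 / 32) ^ s * (n : ℝ) ^ (3 * (2 * n)) := by
        rw [← pow_add]
        congr 2
        omega

theorem sum_Icc_pow_lt_one (m : ℕ) : ∑ s ∈ Finset.Icc 1 m, (9 / 32 : ℝ) ^ s < 1 := by
  have hsum : ∑ s ∈ Finset.Icc 1 m, (9 / 32 : ℝ) ^ s = 9 / 23 - 9 / 23 * (9 / 32) ^ m := by
    induction m with
    | zero => simp
    | succ m ih => rw [Finset.sum_Icc_succ_top (by omega), ih, pow_succ]; ring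
  have hpos : (0 : ℝ) ≤ 9 / 23 * (9 / 32) ^ m := by positivity
  linarith

theorem exists_isConcentrator_prod_bool (ι : Type*) [Fintype ι] [DecidableEq ι] [Nonempty ι] :
    ∃ h : ι × Bool → Fin 3 → ι, IsConcentrator h (Fintype.card ι / 64) := by
  apply exists_isConcentrator_of_sum_lt (Nat.div_le_self _ _)
  have hn : 0 < Fintype.card ι := Fintype.card_pos
  simp only [Fintype.card_prod, Fintype.card_bool, Fintype.card_fin, mul_comm (Fintype.card ι) 2]
  generalize Fintype.card ι = n at hn ⊢
  rify
  calc _ ≤ ∑ s ∈ Finset.Icc 1 (n / 64), (9 / 32 : ℝ) ^ s * (n : ℝ) ^ (3 * (2 * n)) :=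
        Finset.sum_le_sum fun s hs => concentrator_term_le (Finset.mem_Icc.1 hs).2
    _ < (n : ℝ) ^ (3 * (2 * n)) := by
        rw [← Finset.sum_mul]
        exact mul_lt_of_lt_one_left (by positivity) (sum_Icc_pow_lt_one _)

end Concentrator

/-! ### Almost additive and almost modular functions -/

/-- `g` is additive on disjoint elements up to an error `δ`. On a lattice of sets, `δ = 1` gives
`1`-additivity. -/
def IsAlmostAdditive {L X : Type*} [SemilatticeSup L] [OrderBot L] [SeminormedAddCommGroup X]
    (δ : ℝ) (g : L → X) : Prop :=
  ∀ a b, Disjoint a b → ‖g (a ⊔ b) - g a - g b‖ ≤ δ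

/-- `g` is modular up to an error `δ`. -/
def IsAlmostModular {L : Type*} [Lattice L] (δ : ℝ) (g : L → ℝ) : Prop :=
  ∀ a b, |g (a ⊔ b) + g (a ⊓ b) - g a - g b| ≤ δ

theorem IsAlmostAdditive.norm_sup_sub_sum_le {L X κ : Type*} [DistribLattice L] [OrderBot L]
    [SeminormedAddCommGroup X] {δ : ℝ} {g : L → X} (hg : IsAlmostAdditive δ g) (h0 : g ⊥ = 0)
    {E : κ → L} {S : Finset κ} (hE : (S : Set κ).PairwiseDisjoint E) :
    ‖g (S.sup E) - ∑ s ∈ S, g (E s)‖ ≤ δ * S.card := by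
  classical
  induction S using Finset.induction_on with
  | empty => simp [h0]
  | insert a S ha ih =>
    rw [Finset.coe_insert, Set.pairwiseDisjoint_insert_of_notMem (by simpa using ha)] at hE
    have hdisj : Disjoint (E a) (S.sup E) := Finset.disjoint_sup_right.2 hE.2
    rw [Finset.sup_insert, Finset.sum_insert ha, Finset.card_insert_of_notMem ha]
    calc ‖g (E a ⊔ S.sup E) - (g (E a) + ∑ s ∈ S, g (E s))‖
        = ‖(g (E a ⊔ S.sup E) - g (E a) - g (S.sup E)) +
            (g (S.sup E) - ∑ s ∈ S, g (E s))‖ := by congr 1; abel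
      _ ≤ δ + δ * S.card := norm_add_le_of_le (hg _ _ hdisj) (ih hE.1)
      _ = δ * (S.card + 1 : ℕ) := by push_cast; ring

theorem IsAlmostModular.isAlmostAdditive {L : Type*} [Lattice L] [OrderBot L] {δ : ℝ} {g : L → ℝ}
    (hg : IsAlmostModular δ g) : IsAlmostAdditive δ fun a => g a - g ⊥ := fun a b hab => by
  have h := hg a b
  rw [hab.eq_bot] at h
  rwa [Real.norm_eq_abs, show g (a ⊔ b) - g ⊥ - (g a - g ⊥) - (g b - g ⊥) =
    g (a ⊔ b) + g ⊥ - g a - g b by ring]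

theorem IsAlmostModular.le_sdiff {L : Type*} [GeneralizedBooleanAlgebra L] {δ : ℝ} {g : L → ℝ}
    (hg : IsAlmostModular δ g) (a b : L) : g a - g b + g (b \ a) - 2 * δ ≤ g (a \ b) := by
  have ha := hg (a ⊓ b) (a \ b)
  have hb := hg (b ⊓ a) (b \ a)
  rw [sup_inf_sdiff, inf_inf_sdiff] at ha hb
  rw [inf_comm b] at hb
  linarith [(abs_le.1 ha).2, (abs_le.1 hb).1]

theorem IsAlmostModular.le_inf {L κ : Type*} [Lattice L] [OrderTop L] {δ ε M : ℝ} {g : L → ℝ}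
    (hg : IsAlmostModular δ g) (hM : ∀ a, g a ≤ M) {S : Finset κ} (hS : S.Nonempty) {D : κ → L}
    (hD : ∀ t ∈ S, M - ε ≤ g (D t)) : M - S.card * ε - (S.card - 1) * δ ≤ g (S.inf D) := by
  induction hS using Finset.Nonempty.cons_induction with
  | singleton a => simpa using hD a (by simp)
  | cons a S ha _ ih =>
    have hS := ih fun t ht => hD t (Finset.mem_cons_of_mem ht)
    rw [Finset.inf_cons, Finset.card_cons]
    push_cast
    linarith [(abs_le.1 (hg (D a) (S.inf D))).1, hM (D a ⊔ S.inf D),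
      hD a (Finset.mem_cons_self a S)]

theorem IsAlmostAdditive.norm_sum_sup_fiber_sub_sum_le {L X P R : Type*} [DistribLattice L]
    [OrderBot L] [SeminormedAddCommGroup X] [Fintype P] [Fintype R] [DecidableEq R] {δ : ℝ}
    {g : L → X} (hg : IsAlmostAdditive δ g) (h0 : g ⊥ = 0) (f : P → R) {E : P → L}
    (hE : ∀ p q, p ≠ q → f p = f q → Disjoint (E p) (E q)) :
    ‖∑ j, g ((Finset.univ.filter (f · = j)).sup E) - ∑ p, g (E p)‖ ≤ δ * Fintype.card P := by
  rw [← Finset.sum_fiberwise _ f, ← Finset.sum_sub_distrib]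
  calc ‖∑ j, (g ((Finset.univ.filter (f · = j)).sup E) - ∑ p with f p = j, g (E p))‖
      ≤ ∑ j, δ * (Finset.univ.filter (f · = j)).card :=
        norm_sum_le_of_le _ fun j _ => hg.norm_sup_sub_sum_le h0 fun p hp q hq hpq => by
          rw [Finset.mem_coe, Finset.mem_filter_univ] at hp hq
          exact hE p q hpq (hp.trans hq.symm)
    _ = δ * Fintype.card P := by
        rw [← Finset.mul_sum, ← Nat.cast_sum,
          ← Finset.card_eq_sum_card_fiberwise fun p _ => Finset.mem_univ _, Finset.card_univ]

/-- Piece `k` of `A l` is sent along the edge `k` at `l`. Hall's theorem at each point `x` provides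
a cutting for which the pieces with the same destination are disjoint. The error `δ` is paid once
per piece when cutting and once when reassembling. -/
theorem IsConcentrator.exists_recombination {Q L R κ : Type*} [Fintype L] [Fintype R] [Fintype κ]
    [Nonempty κ] [DecidableEq R] {h : L → κ → R} {m : ℕ} (hh : IsConcentrator h m) {δ : ℝ}
    {g : Set Q → ℝ} (hg : IsAlmostAdditive δ g) (h0 : g ∅ = 0) {A : L → Set Q}
    (hA : ∀ x, Nat.card {l // x ∈ A l} ≤ m) :
    ∃ C : R → Set Q, ∑ l, g (A l) ≤
      ∑ j, g (C j) + 2 * (δ * (Fintype.card L * Fintype.card κ)) := by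
  classical
  simp only [Nat.card_eq_fintype_card, Fintype.card_subtype] at hA
  choose t ht using fun x => hh.exists_injOn (hA x)
  let E : L × κ → Set Q := fun p => {x | x ∈ A p.1 ∧ t x p.1 = p.2}
  have hcut := hg.norm_sum_sup_fiber_sub_sum_le h0 (Prod.fst : L × κ → L) (E := E) <| by
    rintro ⟨l, k⟩ ⟨l', k'⟩ hne rfl
    exact Set.disjoint_left.2 fun x hx hx' => hne (congrArg _ (hx.2.symm.trans hx'.2))
  have hjoin := hg.norm_sum_sup_fiber_sub_sum_le h0 (fun p : L × κ => h p.1 p.2) (E := E) <| by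
    refine fun p q hne hpq => Set.disjoint_left.2 fun x ⟨hxp, htp⟩ ⟨hxq, htq⟩ => hne ?_
    have hl : p.1 = q.1 := ht x (by simpa using hxp) (by simpa using hxq) (by simpa [htp, htq])
    exact Prod.ext hl (by rw [← htp, ← htq, hl])
  have hsup (l : L) : (Finset.univ.filter fun p : L × κ => p.1 = l).sup E = A l := by
    ext x
    simp [E]
  simp only [hsup, Fintype.card_prod, Nat.cast_mul, Real.norm_eq_abs] at hcut hjoin
  exact ⟨_, by linarith [(abs_le.1 hcut).2, (abs_le.1 hjoin).1]⟩

theorem card_pi_prod_bool_subtype {κ P : Type*} [Fintype κ] (p : P → Prop) :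
    Nat.card {l : (κ → P) × Bool // ∀ t, p (l.1 t)} = Nat.card {q // p q} ^ Fintype.card κ * 2 := by
  have e : {l : (κ → P) × Bool // ∀ t, p (l.1 t)} ≃ (κ → {q // p q}) × Bool :=
    (Equiv.prodSubtypeFstEquivSubtypeProd (p := fun f : κ → P => ∀ t, p (f t))).trans
      (Equiv.prodCongrLeft fun _ => Equiv.subtypePiEquivPi)
  rw [Nat.card_congr e, Nat.card_prod, Nat.card_fun, Nat.card_eq_fintype_card (α := κ)]
  simp

/-- The core of the Kalton–Roberts argument. The `7`-fold intersections of the sets `F p` are still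
almost maximal for `g`, while a point lies in at most the fraction `2 ^ (-7)` of them. Taken twice
each, they are recombined into half as many sets, on which `g` is at most `M`. -/
theorem IsAlmostModular.le_of_card_le_half {Q P : Type*} [Fintype P] [Nonempty P] {δ ε M : ℝ}
    {g : Set Q → ℝ} (hg : IsAlmostModular δ g) (hM : ∀ A, g A ≤ M) {F : P → Set Q}
    (hF : ∀ p, M - ε ≤ g (F p)) (hcard : ∀ x, 2 * Nat.card {p // x ∈ F p} ≤ Fintype.card P) :
    M ≤ 14 * ε + 24 * δ + g ∅ := by
  classical
  let ι := Fin 7 → P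
  let D : ι × Bool → Set Q := fun l => Finset.univ.inf fun t => F (l.1 t)
  have hD (l : ι × Bool) : M - 7 * ε - 6 * δ ≤ g (D l) := by
    have h := hg.le_inf hM Finset.univ_nonempty fun t _ => hF (l.1 t)
    rw [Finset.card_univ, Fintype.card_fin, Nat.cast_ofNat] at h
    linarith
  have hmult (x : Q) : Nat.card {l // x ∈ D l} ≤ Fintype.card ι / 64 := by
    have hx := Nat.pow_le_pow_left (hcard x) 7
    have hDx (l : ι × Bool) : x ∈ D l ↔ ∀ t, x ∈ F (l.1 t) := by simp [D]
    simp only [hDx, ι, card_pi_prod_bool_subtype (x ∈ F ·), Fintype.card_fun, Fintype.card_fin]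
    rw [mul_pow] at hx
    omega
  obtain ⟨h, hh⟩ := exists_isConcentrator_prod_bool ι
  obtain ⟨C, hC⟩ := hh.exists_recombination hg.isAlmostAdditive (sub_self _) hmult
  have hlower : 2 * Fintype.card ι * (M - 7 * ε - 6 * δ - g ∅) ≤ ∑ l, (g (D l) - g ∅) := by
    refine le_trans (le_of_eq ?_) <| Finset.card_nsmul_le_sum Finset.univ _
      (M - 7 * ε - 6 * δ - g ∅) fun l _ => sub_le_sub_right (hD l) _
    simp [mul_comm (2 : ℝ)]
  have hupper : ∑ j, (g (C j) - g ∅) ≤ Fintype.card ι * (M - g ∅) := by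
    refine (Finset.sum_le_card_nsmul _ _ _ fun j _ => sub_le_sub_right (hM (C j)) _).trans_eq ?_
    simp
  have hι : (0 : ℝ) < Fintype.card ι := by exact_mod_cast Fintype.card_pos
  have hbound : Fintype.card ι * M ≤ Fintype.card ι * (14 * ε + 24 * δ + g ∅) := by
    simp only [Fintype.card_prod, Fintype.card_bool, Fintype.card_fin, Set.bot_eq_empty] at hC
    push_cast at hC
    linarith
  exact le_of_mul_le_mul_left hbound hι

/-! ### The Kalton–Roberts theorem on a finite power set -/

section KaltonRoberts

variable {Q : Type*}

theorem exists_family_card_le.{u} {κ : Type u} [Fintype κ] {w : κ → ℝ} (hw0 : ∀ k, 0 ≤ w k)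
    (hw1 : ∑ k, w k = 1) {ε : ℝ} (hε : 0 < ε) :
    ∃ (I : Type u) (_ : Fintype I) (_ : Nonempty I) (e : I → κ), ∀ s : Finset κ,
      (Nat.card {i // e i ∈ s} : ℝ) ≤ (∑ k ∈ s, w k + ε) * Fintype.card I := by
  classical
  obtain ⟨N, hN⟩ := exists_nat_gt (Fintype.card κ / ε)
  have hN0 : (0 : ℝ) < N := lt_of_le_of_lt (by positivity) hN
  rw [div_lt_iff₀ hε] at hN
  let n : κ → ℕ := fun k => ⌈N * w k⌉₊
  have hcard (s : Finset κ) : Nat.card {i : Σ k, Fin (n k) // i.1 ∈ s} = ∑ k ∈ s, n k := by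
    rw [Nat.card_congr (Equiv.subtypeSigmaEquiv _ (· ∈ s)), Nat.card_eq_fintype_card,
      Fintype.card_sigma]
    simpa using Finset.sum_coe_sort s n
  have hcardI : (N : ℝ) ≤ Fintype.card (Σ k, Fin (n k)) := by
    rw [Fintype.card_sigma]
    push_cast [Fintype.card_fin]
    calc (N : ℝ) = ∑ k, N * w k := by rw [← Finset.mul_sum, hw1, mul_one]
      _ ≤ ∑ k, (n k : ℝ) := Finset.sum_le_sum fun k _ => Nat.le_ceil _
  have hI : Nonempty (Σ k, Fin (n k)) :=
    Fintype.card_pos_iff.1 (by exact_mod_cast hN0.trans_le hcardI)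
  refine ⟨Σ k, Fin (n k), inferInstance, hI, Sigma.fst, fun s => ?_⟩
  have hws : 0 ≤ ∑ k ∈ s, w k := Finset.sum_nonneg fun k _ => hw0 k
  calc (Nat.card {i : Σ k, Fin (n k) // i.1 ∈ s} : ℝ) = ∑ k ∈ s, (n k : ℝ) := by
        rw [hcard, Nat.cast_sum]
    _ ≤ ∑ k ∈ s, (N * w k + 1) := Finset.sum_le_sum fun k _ =>
        (Nat.ceil_lt_add_one (mul_nonneg hN0.le (hw0 k))).le
    _ ≤ N * ∑ k ∈ s, w k + Fintype.card κ := by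
        rw [Finset.sum_add_distrib, ← Finset.mul_sum, Finset.sum_const, nsmul_one]
        gcongr
        exact s.card_le_univ
    _ ≤ (∑ k ∈ s, w k + ε) * N := by linarith
    _ ≤ (∑ k ∈ s, w k + ε) * Fintype.card (Σ k, Fin (n k)) := by gcongr

theorem exists_family_of_mem_convexHull_indicator {𝒜 : Set (Set Q)} {c : Q → ℝ}
    (hc : c ∈ convexHull ℝ ((fun A : Set Q => A.indicator (1 : Q → ℝ)) '' 𝒜)) {ε : ℝ}
    (hε : 0 < ε) :
    ∃ (I : Type) (_ : Fintype I) (_ : Nonempty I) (A : I → Set Q), (∀ i, A i ∈ 𝒜) ∧ ∀ x,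
      (Nat.card {i // x ∈ A i} : ℝ) ≤ (c x + ε) * Fintype.card I ∧
      (Nat.card {i // x ∉ A i} : ℝ) ≤ (1 - c x + ε) * Fintype.card I := by
  classical
  obtain ⟨κ, _, w, z, hw0, hw1, hz, rfl⟩ := mem_convexHull_iff_exists_fintype.1 hc
  choose A hA hAz using hz
  obtain rfl : (fun k => (A k).indicator 1) = z := funext hAz
  obtain ⟨I, _, _, e, he⟩ := exists_family_card_le hw0 hw1 hε
  have hmem (x : Q) :
      ∑ k with x ∈ A k, w k = (∑ k, w k • (A k).indicator (1 : Q → ℝ)) x := by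
    simp [Finset.sum_filter, Set.indicator_apply]
  have hnotMem (x : Q) :
      ∑ k with x ∉ A k, w k = 1 - (∑ k, w k • (A k).indicator (1 : Q → ℝ)) x := by
    rw [← hmem, ← hw1, ← Finset.sum_filter_add_sum_filter_not Finset.univ (x ∈ A ·),
      add_sub_cancel_left]
  refine ⟨I, inferInstance, inferInstance, fun i => A (e i), fun i => hA _, fun x => ⟨?_, ?_⟩⟩
  · simpa only [Finset.mem_filter_univ, hmem] using he (Finset.univ.filter (x ∈ A ·))
  · simpa only [Finset.mem_filter_univ, hnotMem] using he (Finset.univ.filter (x ∉ A ·))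

theorem IsAlmostModular.neg {L : Type*} [Lattice L] {δ : ℝ} {g : L → ℝ}
    (hg : IsAlmostModular δ g) : IsAlmostModular δ (-g) := fun a b => by
  rw [← abs_neg]
  convert hg a b using 2
  simp only [Pi.neg_apply]
  ring

/-- A point `x` lies in about the fraction `c x * (1 - c x) ≤ 1 / 4` of the differences of a set
with `g = M` and one with `g = -M`, and `g` is at least `M - 2 * δ` on these. -/
theorem IsAlmostModular.le_of_mem_convexHull {δ M : ℝ} {g : Set Q → ℝ}
    (hg : IsAlmostModular δ g) (hM : ∀ A, |g A| ≤ M) {c : Q → ℝ}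
    (hpos : c ∈ convexHull ℝ ((fun A : Set Q => A.indicator (1 : Q → ℝ)) '' {A | g A = M}))
    (hneg : c ∈ convexHull ℝ ((fun A : Set Q => A.indicator (1 : Q → ℝ)) '' {A | g A = -M})) :
    M ≤ 52 * δ + g ∅ := by
  obtain ⟨I, _, _, A, hA, hAcard⟩ :=
    exists_family_of_mem_convexHull_indicator hpos (ε := 1 / 8) (by norm_num)
  obtain ⟨J, _, _, B, hB, hBcard⟩ :=
    exists_family_of_mem_convexHull_indicator hneg (ε := 1 / 8) (by norm_num)
  have hsdiff (q : I × J) : M - 2 * δ ≤ g (A q.1 \ B q.2) := by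
    have hAq : g (A q.1) = M := hA q.1
    have hBq : g (B q.2) = -M := hB q.2
    linarith [hg.le_sdiff (A q.1) (B q.2), (abs_le.1 (hM (B q.2 \ A q.1))).1]
  have hcard (x : Q) :
      2 * Nat.card {q : I × J // x ∈ A q.1 \ B q.2} ≤ Fintype.card (I × J) := by
    have hprod := Nat.card_congr (Equiv.subtypeProdEquivProd (p := (x ∈ A ·)) (q := (x ∉ B ·)))
    simp only [Set.mem_sdiff, hprod, Nat.card_prod, Fintype.card_prod]
    rify
    calc 2 * ((Nat.card {i // x ∈ A i} : ℝ) * Nat.card {j // x ∉ B j})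
        ≤ 2 * (((c x + 1 / 8) * Fintype.card I) * ((1 - c x + 1 / 8) * Fintype.card J)) := by
          gcongr
          exacts [(Nat.cast_nonneg _).trans (hAcard x).1, (hAcard x).1, (hBcard x).2]
      _ = (2 * ((c x + 1 / 8) * (1 - c x + 1 / 8))) * (Fintype.card I * Fintype.card J) := by ring
      _ ≤ 1 * (Fintype.card I * Fintype.card J) := by
          gcongr
          nlinarith [sq_nonneg (c x - 1 / 2)]
      _ = Fintype.card I * Fintype.card J := one_mul _
  linarith [hg.le_of_card_le_half (fun A => (abs_le.1 (hM A)).2) hsdiff hcard]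

/-- One half of Kolmogorov's criterion for best uniform approximation. -/
theorem exists_norm_add_smul_lt {ι : Type*} [Fintype ι] [Nonempty ι] {g ψ : ι → ℝ}
    (hneg : ∀ i, g i = ‖g‖ → ψ i < 0) (hpos : ∀ i, g i = -‖g‖ → 0 < ψ i) :
    ∃ t : ℝ, ‖g + t • ψ‖ < ‖g‖ := by
  have hg : 0 < ‖g‖ := by
    obtain ⟨i⟩ := ‹Nonempty ι›
    refine norm_pos_iff.2 fun h => ?_
    exact lt_asymm (hneg i (by simp [h])) (hpos i (by simp [h]))
  have heventually {a b M : ℝ} (ha : a ≤ M) (hb : a = M → b < 0) :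
      ∀ᶠ t in nhdsWithin (0 : ℝ) (Set.Ioi 0), a + t * b < M := by
    obtain rfl | hlt := ha.eq_or_lt
    · filter_upwards [self_mem_nhdsWithin] with t ht
      linarith [mul_neg_of_pos_of_neg ht (hb rfl)]
    · have hcont : Filter.Tendsto (fun t : ℝ => a + t * b) (nhds 0) (nhds (a + 0 * b)) :=
        Continuous.tendsto (by fun_prop) 0
      exact nhdsWithin_le_nhds (hcont.eventually_lt_const (by simpa using hlt))
  have hbound (i : ι) := abs_le.1 (norm_le_pi_norm g i)
  have hlt : ∀ᶠ t in nhdsWithin (0 : ℝ) (Set.Ioi 0), ∀ i, ‖(g + t • ψ) i‖ < ‖g‖ := by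
    refine Filter.eventually_all.2 fun i => ?_
    filter_upwards [heventually (hbound i).2 (hneg i),
      heventually (b := -ψ i) (neg_le.1 (hbound i).1)
        fun h => neg_neg_of_pos (hpos i (neg_eq_iff_eq_neg.1 h))] with t hupper hlower
    rw [Pi.add_apply, Pi.smul_apply, smul_eq_mul, Real.norm_eq_abs, abs_lt]
    constructor <;> linarith
  obtain ⟨t, ht⟩ := hlt.exists
  exact ⟨t, (pi_norm_lt_iff hg).2 ht⟩

section BestApproximation

variable {ι E : Type*} [NormedAddCommGroup E] [NormedSpace ℝ E]

/-- The values at the points `v i` of the continuous affine function with constant term `p.1` and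
linear part `p.2`. -/
def affineEval (v : ι → E) : (ℝ × (E →L[ℝ] ℝ)) →ₗ[ℝ] (ι → ℝ) where
  toFun p i := p.1 + p.2 (v i)
  map_add' p q := by
    ext i
    simp only [Prod.fst_add, Prod.snd_add, add_apply, Pi.add_apply]
    ring
  map_smul' r p := by
    ext i
    simp [mul_add]

variable [Fintype ι]

theorem exists_forall_norm_sub_affineEval_le (v : ι → E) (f : ι → ℝ) :
    ∃ p, ∀ q, ‖f - affineEval v p‖ ≤ ‖f - affineEval v p - affineEval v q‖ := by
  obtain ⟨_, ⟨p, rfl⟩, hp⟩ := (Submodule.closed_of_finiteDimensional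
    (LinearMap.range (affineEval v))).exists_infDist_eq_dist ⟨0, Submodule.zero_mem _⟩ f
  refine ⟨p, fun q => ?_⟩
  rw [← dist_eq_norm, ← hp, sub_sub, ← map_add, ← dist_eq_norm]
  exact Metric.infDist_le_dist_of_mem (LinearMap.mem_range_self _ (p + q))

/-- A functional separating the two hulls would improve the approximation. -/
theorem not_disjoint_convexHull_of_forall_norm_le [Nonempty ι] {v : ι → E} {g : ι → ℝ}
    (hg : ∀ q, ‖g‖ ≤ ‖g - affineEval v q‖) :
    ¬ Disjoint (convexHull ℝ (v '' {i | g i = ‖g‖})) (convexHull ℝ (v '' {i | g i = -‖g‖})) := by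
  intro hdisj
  have hcompact (s : Set ι) : IsCompact (convexHull ℝ (v '' s)) :=
    ((Set.toFinite s).image v).isCompact_convexHull ℝ
  obtain ⟨φ, a, b, ha, hab, hb⟩ := geometric_hahn_banach_compact_closed (convex_convexHull ℝ _)
    (hcompact _) (convex_convexHull ℝ _) (hcompact _).isClosed hdisj
  obtain ⟨t, ht⟩ := exists_norm_add_smul_lt (g := g) (ψ := affineEval v (-a, φ))
    (fun i hi => by
      have := ha (v i) (subset_convexHull ℝ _ ⟨i, hi, rfl⟩)
      change -a + φ (v i) < 0
      linarith)
    (fun i hi => by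
      have := hb (v i) (subset_convexHull ℝ _ ⟨i, hi, rfl⟩)
      change 0 < -a + φ (v i)
      linarith)
  refine ht.not_ge ((hg (-t • (-a, φ))).trans_eq ?_)
  rw [map_smul, neg_smul, sub_neg_eq_add]

end BestApproximation

theorem IsAlmostModular.exists_affine_approx [Finite Q] {δ : ℝ} {f : Set Q → ℝ}
    (hf : IsAlmostModular δ f) :
    ∃ (a : ℝ) (φ : (Q → ℝ) →L[ℝ] ℝ), ∀ A : Set Q, |f A - (a + φ (A.indicator 1))| ≤ 52 * δ := by
  classical
  have := Fintype.ofFinite Q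
  let v : Set Q → (Q → ℝ) := fun A => A.indicator 1
  obtain ⟨p, hp⟩ := exists_forall_norm_sub_affineEval_le v f
  let g : Set Q → ℝ := f - affineEval v p
  have hg : IsAlmostModular δ g := fun A B => by
    have hv : p.2 (v (A ∪ B)) + p.2 (v (A ∩ B)) = p.2 (v A) + p.2 (v B) := by
      rw [← map_add, ← map_add]
      exact congrArg p.2 (Set.indicator_union_add_inter _ _ _)
    convert hf A B using 2
    simp only [g, affineEval, LinearMap.coe_mk, AddHom.coe_mk, Pi.sub_apply, Set.sup_eq_union,
      Set.inf_eq_inter]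
    linarith
  have hbound (A : Set Q) : |g A| ≤ ‖g‖ := norm_le_pi_norm g A
  obtain ⟨c, hpos, hneg⟩ := Set.not_disjoint_iff.1 (not_disjoint_convexHull_of_forall_norm_le hp)
  have hle := hg.le_of_mem_convexHull hbound hpos hneg
  have hle' : ‖g‖ ≤ 52 * δ + -g ∅ := hg.neg.le_of_mem_convexHull (by simpa using hbound) (c := c)
    (by simp only [Pi.neg_apply, neg_eq_iff_eq_neg]; exact hneg)
    (by simp only [Pi.neg_apply, neg_inj]; exact hpos)
  exact ⟨p.1, p.2, fun A => (hbound A).trans (by linarith)⟩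

theorem IsAlmostAdditive.isAlmostModular {L : Type*} [GeneralizedBooleanAlgebra L] {δ : ℝ}
    {f : L → ℝ} (hf : IsAlmostAdditive δ f) : IsAlmostModular (2 * δ) f := fun a b => by
  have hsup := hf a (b \ a) disjoint_sdiff_self_right
  have hb := hf (b ⊓ a) (b \ a) (disjoint_sdiff_self_right.mono_left inf_le_right)
  rw [sup_sdiff_self_right] at hsup
  rw [sup_inf_sdiff, inf_comm] at hb
  rw [Real.norm_eq_abs, abs_le] at hsup hb
  rw [abs_le]
  constructor <;> linarith

theorem IsAlmostAdditive.exists_additive_approx [Finite Q] {δ : ℝ} {f : Set Q → ℝ}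
    (hf : IsAlmostAdditive δ f) :
    ∃ μ : Set Q → ℝ, (∀ A B, Disjoint A B → μ (A ∪ B) = μ A + μ B) ∧
      ∀ A, |f A - μ A| ≤ 209 * δ := by
  obtain ⟨a, φ, hφ⟩ := hf.isAlmostModular.exists_affine_approx
  refine ⟨fun A => φ (A.indicator 1), fun A B hAB => ?_, fun A => ?_⟩
  · simp only [Set.indicator_union_of_disjoint hAB, ← map_add]
    rfl
  · have hempty : |f ∅| ≤ δ := by simpa using hf ∅ ∅ disjoint_bot_left
    have ha := hφ ∅
    rw [Set.indicator_empty', map_zero, add_zero] at ha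
    have hA := hφ A
    rw [abs_le] at hempty ha hA ⊢
    constructor <;> linarith

end KaltonRoberts

/-! ### Finite set algebras -/

section Gluing

variable {K : Type*} [TopologicalSpace K]

theorem exists_partitionOfUnity_isSubordinate [CompactSpace K] [T2Space K] {U : K → Set K}
    (hUo : ∀ x, IsOpen (U x)) (hU : ∀ x, x ∈ U x) :
    ∃ (t : Finset K) (ρ : PartitionOfUnity t K), ρ.IsSubordinate fun i => U i := by
  obtain ⟨t, ht⟩ := isCompact_univ.elim_finite_subcover U hUo
    fun x _ => Set.mem_iUnion.2 ⟨x, hU x⟩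
  have hcover : Set.univ ⊆ ⋃ i : t, U i := fun y hy => by simpa using ht hy
  exact ⟨t, PartitionOfUnity.exists_isSubordinate isClosed_univ _ (fun i => hUo i) hcover⟩

theorem norm_sub_sum_smul_le_of_partitionOfUnity [CompactSpace K] {ι : Type*} [Fintype ι]
    (ρ : PartitionOfUnity ι K) (f : C(K, ℝ)) {c : ι → ℝ} {ε : ℝ} (hε : 0 ≤ ε)
    (h : ∀ i y, ρ i y ≠ 0 → |f y - c i| ≤ ε) : ‖f - ∑ i, c i • ρ i‖ ≤ ε := by
  refine (ContinuousMap.norm_le _ hε).2 fun y => ?_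
  have hsum : ∑ i, ρ i y = 1 := by
    rw [← finsum_eq_sum_of_fintype, ρ.sum_eq_one (Set.mem_univ y)]
  have hy : (f - ∑ i, c i • ρ i) y = ∑ i, ρ i y * (f y - c i) := by
    simp only [mul_sub, Finset.sum_sub_distrib, ← Finset.sum_mul, hsum, one_mul]
    simp [ContinuousMap.sum_apply, mul_comm]
  calc ‖(f - ∑ i, c i • ρ i) y‖ ≤ ∑ i, |ρ i y * (f y - c i)| := by
        rw [hy]
        exact Finset.abs_sum_le_sum_abs _ _
    _ ≤ ∑ i, ρ i y * ε := by
        refine Finset.sum_le_sum fun i _ => ?_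
        rw [abs_mul, abs_of_nonneg (ρ.nonneg i y)]
        rcases eq_or_ne (ρ i y) 0 with h0 | h0
        · simp [h0]
        · exact mul_le_mul_of_nonneg_left (h i y h0) (ρ.nonneg i y)
    _ = ε := by rw [← Finset.sum_mul, hsum, one_mul]

theorem IsAlmostAdditive.exists_continuousMap_additive_approx [CompactSpace K] [T2Space K]
    {Q : Type*} [Finite Q] {δ ε : ℝ} {ν : Set Q → C(K, ℝ)} (hν : IsAlmostAdditive δ ν)
    (hε : 0 < ε) :
    ∃ μ : Set Q → C(K, ℝ), (∀ A B, Disjoint A B → μ (A ∪ B) = μ A + μ B) ∧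
      ∀ A, ‖ν A - μ A‖ ≤ 209 * δ + ε := by
  have hpt (x : K) : IsAlmostAdditive δ fun A => ν A x := fun A B hAB =>
    ((ν (A ∪ B) - ν A - ν B).norm_coe_le_norm x).trans (hν A B hAB)
  choose m hm_add hm_near using fun x => (hpt x).exists_additive_approx
  have hδ : 0 ≤ δ := (norm_nonneg _).trans (hν ∅ ∅ disjoint_bot_left)
  let U (x : K) : Set K := {y | ∀ A, |ν A y - ν A x| < ε}
  have hUo (x : K) : IsOpen (U x) := by
    simp only [U, Set.ofPred_forall]
    exact isOpen_iInter_of_finite fun A => isOpen_lt (by fun_prop) continuous_const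
  obtain ⟨t, ρ, hρ⟩ :=
    exists_partitionOfUnity_isSubordinate hUo fun x A => by simpa using hε
  refine ⟨fun A => ∑ i : t, m i A • ρ i, fun A B hAB => ?_, fun A =>
    norm_sub_sum_smul_le_of_partitionOfUnity ρ _ (by positivity) fun i y hy => ?_⟩
  · simp only [hm_add _ A B hAB, add_smul, Finset.sum_add_distrib]
  · have hyU : |ν A y - ν A i| < ε := hρ i (subset_tsupport _ hy) A
    linarith [abs_sub_le (ν A y) (ν A i) (m i A), hm_near i A]

end Gluing

section Atoms

variable {Ω : Type*} {F : Set (Set Ω)}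

theorem IsSetAlg.sUnion_mem (hF : IsSetAlg F) {G : Set (Set Ω)} (hG : G.Finite) (hGF : G ⊆ F) :
    ⋃₀ G ∈ F := by
  induction G, hG using Set.Finite.induction_on with
  | empty => simpa using hF.1
  | insert _ _ ih =>
    rw [Set.sUnion_insert]
    exact hF.2.2 _ (hGF (Set.mem_insert _ _)) _ (ih fun x hx => hGF (Set.mem_insert_of_mem _ hx))

/-- The map sending a point to the set of members of `F` containing it. The fibres of this map are
the atoms of a finite set algebra `F`, which is thereby identified with a power set. -/
def atomMap (F : Set (Set Ω)) (x : Ω) : Set F := {A | x ∈ A.1}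

theorem IsSetAlg.atomMap_eq_of_forall_imp (hF : IsSetAlg F) {x y : Ω}
    (h : ∀ A ∈ F, y ∈ A → x ∈ A) : atomMap F y = atomMap F x := by
  ext ⟨A, hA⟩
  exact ⟨h A hA, fun hx => by_contra fun hy => h Aᶜ (hF.2.1 A hA) hy hx⟩

theorem IsSetAlg.preimage_atomMap_singleton_mem (hF : IsSetAlg F) (hfin : F.Finite) (x : Ω) :
    atomMap F ⁻¹' {atomMap F x} ∈ F := by
  have hunion : ⋃₀ {A ∈ F | x ∉ A} ∈ F :=
    hF.sUnion_mem (hfin.subset fun A hA => hA.1) fun A hA => hA.1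
  convert hF.2.1 _ hunion using 1
  refine Set.Subset.antisymm ?_ fun y hy => hF.atomMap_eq_of_forall_imp fun A hA hyA =>
    by_contra fun hxA => hy ⟨A, ⟨hA, hxA⟩, hyA⟩
  rintro y (hxy : atomMap F y = atomMap F x) ⟨A, ⟨hA, hxA⟩, hyA⟩
  have hyx : (⟨A, hA⟩ : F) ∈ atomMap F x := hxy ▸ hyA
  exact hxA hyx

theorem IsSetAlg.preimage_atomMap_mem (hF : IsSetAlg F) (hfin : F.Finite) (S : Set (Set F)) :
    atomMap F ⁻¹' S ∈ F := by
  have : Finite F := hfin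
  have hS : atomMap F ⁻¹' S =
      ⋃₀ ((fun s => atomMap F ⁻¹' {s}) '' (S ∩ Set.range (atomMap F))) := by
    ext y
    simp [and_comm]
  rw [hS]
  refine hF.sUnion_mem ((Set.toFinite _).image _) ?_
  rintro _ ⟨_, ⟨_, x, rfl⟩, rfl⟩
  exact hF.preimage_atomMap_singleton_mem hfin x

theorem preimage_image_atomMap {A : Set Ω} (hA : A ∈ F) : atomMap F ⁻¹' (atomMap F '' A) = A := by
  refine Set.Subset.antisymm ?_ (Set.subset_preimage_image _ _)
  rintro y ⟨x, hx, hxy⟩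
  have hxA : (⟨A, hA⟩ : F) ∈ atomMap F x := hx
  rwa [hxy] at hxA

end Atoms

theorem hasOmegaSVMBound_continuousMap (K : Type*) [TopologicalSpace K] [CompactSpace K]
    [T2Space K] : HasOmegaSVMBound C(K, ℝ) 210 := by
  intro Ω F hF hfin ν hν
  have : Finite F := hfin
  have hνadd : IsAlmostAdditive 1 fun S : Set (Set F) => ν (atomMap F ⁻¹' S) := fun S T hST =>
    hν _ (hF.preimage_atomMap_mem hfin S) _ (hF.preimage_atomMap_mem hfin T) (hST.preimage _)
  obtain ⟨μ, hμ_add, hμ_near⟩ := hνadd.exists_continuousMap_additive_approx one_pos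
  refine ⟨fun A => μ (atomMap F '' A), fun A _ B hB hAB => ?_, fun A hA => ?_⟩
  · simp only [Set.image_union]
    refine hμ_add _ _ (Set.disjoint_image_left.2 ?_)
    rwa [preimage_image_atomMap hB]
  · have hA_near := hμ_near (atomMap F '' A)
    norm_num [preimage_image_atomMap hA] at hA_near
    exact hA_near

/-! ### Spaces `C(K)` with finite Cantor–Bendixson rank -/

open scoped ZeroAtInfty

section ZeroAtInfty

variable {Γ Δ : Type*} [TopologicalSpace Γ] [TopologicalSpace Δ]

theorem tendsto_cocompact_zero_iff {f : Γ → ℝ} :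
    Filter.Tendsto f (Filter.cocompact Γ) (nhds 0) ↔
      ∀ ε > 0, ∃ s, IsCompact s ∧ ∀ x ∉ s, |f x| < ε := by
  simp [Filter.hasBasis_cocompact.tendsto_iff Metric.nhds_basis_ball]

theorem c0_norm_le {f : C₀(Γ, ℝ)} {C : ℝ} (hC : 0 ≤ C) : ‖f‖ ≤ C ↔ ∀ x, |f x| ≤ C :=
  BoundedContinuousFunction.norm_le (f := f.toBCF) hC

theorem abs_apply_le_c0_norm (f : C₀(Γ, ℝ)) (x : Γ) : |f x| ≤ ‖f‖ :=
  f.toBCF.norm_coe_le_norm x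

/-- Composition with a cocompact map, as a bounded operator between `C₀` spaces. -/
noncomputable def c0Comp (φ : CocompactMap Γ Δ) : C₀(Δ, ℝ) →L[ℝ] C₀(Γ, ℝ) :=
  LinearMap.mkContinuous (ZeroAtInftyContinuousMap.compLinearMap φ) 1 fun f => by
    rw [one_mul]
    exact (c0_norm_le (norm_nonneg f)).2 fun x => abs_apply_le_c0_norm f (φ x)

/-- The isomorphism of `C₀` spaces induced by a homeomorphism. -/
noncomputable def c0Congr (e : Γ ≃ₜ Δ) : C₀(Δ, ℝ) ≃L[ℝ] C₀(Γ, ℝ) :=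
  ContinuousLinearEquiv.equivOfInverse (c0Comp e.toCocompactMap) (c0Comp e.symm.toCocompactMap)
    (fun f => by ext x; exact congrArg f (e.apply_symm_apply x))
    (fun f => by ext x; exact congrArg f (e.symm_apply_apply x))

theorem tendsto_sumElim_cocompact_zero {f : Γ → ℝ} {g : Δ → ℝ}
    (hf : Filter.Tendsto f (Filter.cocompact Γ) (nhds 0))
    (hg : Filter.Tendsto g (Filter.cocompact Δ) (nhds 0)) :
    Filter.Tendsto (Sum.elim f g) (Filter.cocompact (Γ ⊕ Δ)) (nhds 0) := by
  rw [tendsto_cocompact_zero_iff] at *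
  intro ε hε
  obtain ⟨s, hs, hfs⟩ := hf ε hε
  obtain ⟨t, ht, hgt⟩ := hg ε hε
  refine ⟨Sum.inl '' s ∪ Sum.inr '' t,
    (hs.image continuous_inl).union (ht.image continuous_inr), ?_⟩
  rintro (x | x) hx
  · exact hfs x fun hxs => hx (Or.inl ⟨x, hxs, rfl⟩)
  · exact hgt x fun hxt => hx (Or.inr ⟨x, hxt, rfl⟩)

/-- `C₀` turns disjoint unions into products. -/
noncomputable def c0SumEquiv : C₀(Γ ⊕ Δ, ℝ) ≃L[ℝ] C₀(Γ, ℝ) × C₀(Δ, ℝ) :=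
  ContinuousLinearEquiv.ofBijective
    ((c0Comp ⟨⟨Sum.inl, continuous_inl⟩, Topology.IsClosedEmbedding.inl.tendsto_cocompact⟩).prod
      (c0Comp ⟨⟨Sum.inr, continuous_inr⟩, Topology.IsClosedEmbedding.inr.tendsto_cocompact⟩))
    (LinearMap.ker_eq_bot'.2 fun f hf => by
      ext (x | x)
      · exact DFunLike.congr_fun (congrArg Prod.fst hf) x
      · exact DFunLike.congr_fun (congrArg Prod.snd hf) x)
    (LinearMap.range_eq_top.2 fun ⟨a, b⟩ =>
      ⟨⟨⟨Sum.elim a b, a.continuous.sumElim b.continuous⟩,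
        tendsto_sumElim_cocompact_zero a.zero_at_infty' b.zero_at_infty'⟩, rfl⟩)

end ZeroAtInfty

section ExtendByZero

variable {K : Type*} [TopologicalSpace K] {D : Set K}

theorem continuous_extend_zero [T2Space K] (hD : IsClosed D) (b : C₀((Dᶜ : Set K), ℝ)) :
    Continuous (Function.extend Subtype.val b 0) := by
  have hval := hD.isOpen_compl.isOpenEmbedding_subtypeVal
  refine continuous_iff_continuousAt.2 fun x => ?_
  by_cases hx : x ∈ D
  · have hx0 : Function.extend Subtype.val b 0 x = 0 :=
      Function.extend_apply' _ _ _ fun ⟨y, hy⟩ => y.2 (hy ▸ hx)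
    rw [ContinuousAt, hx0, Metric.tendsto_nhds]
    intro ε hε
    obtain ⟨s, hs, hbs⟩ := tendsto_cocompact_zero_iff.1 b.zero_at_infty' ε hε
    have hopen : (Subtype.val '' s : Set K)ᶜ ∈ nhds x := by
      refine (hs.image continuous_subtype_val).isClosed.isOpen_compl.mem_nhds ?_
      rintro ⟨y, -, rfl⟩
      exact y.2 hx
    filter_upwards [hopen] with y hy
    rw [Real.dist_0_eq_abs]
    by_cases hyD : y ∈ D
    · rw [Function.extend_apply' _ _ _ fun ⟨z, hz⟩ => z.2 (hz ▸ hyD)]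
      simpa using hε
    · lift y to (Dᶜ : Set K) using hyD
      rw [Subtype.val_injective.extend_apply]
      exact hbs y fun hys => hy ⟨y, hys, rfl⟩
  · lift x to (Dᶜ : Set K) using hx
    rw [← hval.continuousAt_iff, Function.extend_comp Subtype.val_injective]
    exact b.continuous.continuousAt

variable [CompactSpace K] [T2Space K]

/-- Extension by zero from the complement of a closed set `D` of a compact space. -/
noncomputable def extendByZero (hD : IsClosed D) : C₀((Dᶜ : Set K), ℝ) →L[ℝ] C(K, ℝ) :=
  LinearMap.mkContinuous
    { toFun := fun b => ⟨Function.extend Subtype.val b 0, continuous_extend_zero hD b⟩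
      map_add' := fun b c => by
        ext x
        simpa using congrFun (Function.extend_add Subtype.val b c 0 0) x
      map_smul' := fun c b => by
        ext x
        simpa using congrFun (Function.extend_smul c Subtype.val b 0) x } 1 fun b => by
    rw [one_mul]
    refine (ContinuousMap.norm_le _ (norm_nonneg b)).2 fun x => ?_
    by_cases hx : ∃ y : (Dᶜ : Set K), y.1 = x
    · obtain ⟨y, rfl⟩ := hx
      simpa [Subtype.val_injective.extend_apply] using abs_apply_le_c0_norm b y
    · simp [Function.extend_apply' _ _ _ hx]

theorem extendByZero_apply_coe (hD : IsClosed D) (b : C₀((Dᶜ : Set K), ℝ)) (x : (Dᶜ : Set K)) :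
    extendByZero hD b x = b x :=
  Subtype.val_injective.extend_apply b 0 x

theorem extendByZero_apply_of_mem (hD : IsClosed D) (b : C₀((Dᶜ : Set K), ℝ)) {x : K}
    (hx : x ∈ D) : extendByZero hD b x = 0 :=
  Function.extend_apply' _ _ _ fun ⟨y, hy⟩ => y.2 (hy ▸ hx)

theorem extendByZero_injective (hD : IsClosed D) : Function.Injective (extendByZero hD) :=
  fun b c hbc => by
    ext x
    rw [← extendByZero_apply_coe hD, hbc, extendByZero_apply_coe]

theorem exists_extendByZero_eq (hD : IsClosed D) {f : C(K, ℝ)} (hf : ∀ x ∈ D, f x = 0) :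
    ∃ b, extendByZero hD b = f := by
  have hlim : Filter.Tendsto (fun x : (Dᶜ : Set K) => f x) (Filter.cocompact _) (nhds 0) := by
    refine tendsto_cocompact_zero_iff.2 fun ε hε => ⟨Subtype.val ⁻¹' {x | ε ≤ |f x|}, ?_, ?_⟩
    · refine (Topology.IsInducing.subtypeVal.isCompact_preimage_iff ?_).2
        (isClosed_le continuous_const (by fun_prop)).isCompact
      refine fun x (hx : ε ≤ |f x|) => Subtype.range_coe.ge fun hxD => ?_
      rw [hf x hxD, abs_zero] at hx
      exact hx.not_gt hε
    · exact fun x hx => not_le.1 hx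
  refine ⟨⟨⟨fun x => f x, by fun_prop⟩, hlim⟩, ContinuousMap.ext fun x => ?_⟩
  by_cases hx : x ∈ D
  · rw [extendByZero_apply_of_mem hD _ hx, hf x hx]
  · exact extendByZero_apply_coe hD _ ⟨x, hx⟩

/-- The inverse is `(a, b) ↦ a ∘ r + b`, with `b` extended by zero. -/
theorem nonempty_continuousLinearEquiv_of_retraction (hD : IsClosed D) (r : C(K, D))
    (hr : ∀ x : D, r x = x) : Nonempty (C(K, ℝ) ≃L[ℝ] C(D, ℝ) × C₀((Dᶜ : Set K), ℝ)) := by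
  have : CompactSpace D := isCompact_iff_compactSpace.1 hD.isCompact
  let S := (ContinuousMap.compCLM ℝ ℝ r).coprod (extendByZero hD)
  have hS_apply (a : C(D, ℝ)) (b : C₀((Dᶜ : Set K), ℝ)) (x : K) :
      S (a, b) x = a (r x) + extendByZero hD b x := rfl
  have hS_mem (a : C(D, ℝ)) (b : C₀((Dᶜ : Set K), ℝ)) (x : D) : S (a, b) x = a x := by
    rw [hS_apply, hr, extendByZero_apply_of_mem hD b x.2, add_zero]
  refine ⟨(ContinuousLinearEquiv.ofBijective S ?_ ?_).symm⟩
  · refine LinearMap.ker_eq_bot'.2 ?_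
    rintro ⟨a, b⟩ (hab : S (a, b) = 0)
    have ha : a = 0 := ContinuousMap.ext fun x => (hS_mem a b x).symm.trans (by rw [hab]; rfl)
    subst ha
    have hb : extendByZero hD b = extendByZero hD 0 := by
      simpa [S] using hab
    rw [extendByZero_injective hD hb, Prod.mk_zero_zero]
  · refine LinearMap.range_eq_top.2 fun f => ?_
    obtain ⟨b, hb⟩ := exists_extendByZero_eq hD (f := f - (f.restrict D).comp r) fun x hx => by
      simp [hr ⟨x, hx⟩]
    refine ⟨(f.restrict D, b), ContinuousMap.ext fun x => (hS_apply _ _ x).trans ?_⟩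
    rw [hb]
    simp

end ExtendByZero

theorem exists_retraction_of_forall_isOpen_singleton {K : Type*} [MetricSpace K] {D : Set K}
    (hD : IsCompact D) (hne : D.Nonempty) (hiso : ∀ x ∉ D, IsOpen ({x} : Set K)) :
    ∃ r : C(K, D), ∀ x : D, r x = x := by
  have hnearest (x : K) : ∃ y : D, Metric.infDist x D = dist x y := by
    obtain ⟨y, hy, hxy⟩ := hD.exists_infDist_eq_dist hne x
    exact ⟨⟨y, hy⟩, hxy⟩
  choose r hr using hnearest
  have hr_mem (x : D) : r x = x := by
    have hx := hr x
    rw [Metric.infDist_zero_of_mem x.2] at hx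
    exact Subtype.ext (dist_eq_zero.1 hx.symm).symm
  refine ⟨⟨r, continuous_iff_continuousAt.2 fun x => ?_⟩, hr_mem⟩
  by_cases hx : x ∈ D
  · refine Metric.continuousAt_iff.2 fun ε hε => ⟨ε / 2, half_pos hε, fun {y} hy => ?_⟩
    have hry : dist y (r y) ≤ dist y x := by
      rw [← hr y]
      exact Metric.infDist_le_dist_of_mem hx
    rw [hr_mem ⟨x, hx⟩, Subtype.dist_eq]
    linarith [dist_triangle_left (r y : K) x y]
  · rw [ContinuousAt, (isOpen_singleton_iff_nhds_eq_pure x).1 (hiso x hx)]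
    exact tendsto_pure_nhds _ _

/-- `X` is isomorphic to `c₀(Γ)` for a countable set `Γ`, that is, to `c₀` or to some `ℝⁿ`. Taking
`Γ` among the subsets of `ℕ` keeps the definition independent of universe levels. -/
def IsomorphicToCountableC0 (X : Type*) [NormedAddCommGroup X] [NormedSpace ℝ X] : Prop :=
  ∃ Γ : Set ℕ, Nonempty (X ≃L[ℝ] C₀(Γ, ℝ))

theorem isomorphicToCountableC0_c0 (Γ : Type*) [TopologicalSpace Γ] [DiscreteTopology Γ]
    [Countable Γ] : IsomorphicToCountableC0 C₀(Γ, ℝ) := by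
  obtain ⟨ι, hι⟩ := exists_injective_nat Γ
  exact ⟨Set.range ι, ⟨c0Congr (Equiv.ofInjective ι hι).symm.toHomeomorphOfDiscrete⟩⟩

section IsomorphicToCountableC0

variable {X Y : Type*} [NormedAddCommGroup X] [NormedSpace ℝ X] [NormedAddCommGroup Y]
  [NormedSpace ℝ Y]

theorem IsomorphicToCountableC0.of_equiv (hY : IsomorphicToCountableC0 Y) (e : X ≃L[ℝ] Y) :
    IsomorphicToCountableC0 X :=
  let ⟨Γ, ⟨e'⟩⟩ := hY
  ⟨Γ, ⟨e.trans e'⟩⟩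

theorem IsomorphicToCountableC0.prod (hX : IsomorphicToCountableC0 X)
    (hY : IsomorphicToCountableC0 Y) : IsomorphicToCountableC0 (X × Y) := by
  obtain ⟨Γ, ⟨e⟩⟩ := hX
  obtain ⟨Δ, ⟨e'⟩⟩ := hY
  exact (isomorphicToCountableC0_c0 (Γ ⊕ Δ)).of_equiv ((e.prodCongr e').trans c0SumEquiv.symm)

theorem IsomorphicToCountableC0.finiteDimensional_or (hX : IsomorphicToCountableC0 X) :
    FiniteDimensional ℝ X ∨ Nonempty (X ≃L[ℝ] C₀(ℕ, ℝ)) := by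
  obtain ⟨Γ, ⟨e⟩⟩ := hX
  rcases finite_or_infinite Γ with _ | _
  · let coeLinearMap : C₀(Γ, ℝ) →ₗ[ℝ] (Γ → ℝ) :=
      { toFun := fun f => f, map_add' := fun _ _ => rfl, map_smul' := fun _ _ => rfl }
    exact Or.inl (FiniteDimensional.of_injective (coeLinearMap ∘ₗ e.toLinearMap)
      (DFunLike.coe_injective.comp e.injective))
  · obtain ⟨_⟩ := nonempty_denumerable Γ
    exact Or.inr ⟨e.trans (c0Congr (Denumerable.eqv Γ).symm.toHomeomorphOfDiscrete)⟩

end IsomorphicToCountableC0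

section CantorBendixson

/-- The finite levels of the Cantor–Bendixson derivation: `cbDeriv K n` is the `n`-th iterated
derived set of `K`. -/
def cbDeriv (K : Type*) [TopologicalSpace K] : ℕ → Set K
  | 0 => Set.univ
  | n + 1 => derivedSet (cbDeriv K n)

theorem image_cbDeriv_derivedSet_subset (K : Type*) [TopologicalSpace K] (n : ℕ) :
    Subtype.val '' cbDeriv (derivedSet (Set.univ : Set K)) n ⊆ cbDeriv K (n + 1) := by
  induction n with
  | zero => exact Subtype.coe_image_univ _ |>.subset
  | succ n ih =>
    exact (continuous_subtype_val.image_derivedSet Subtype.val_injective).trans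
      (derivedSet_mono _ _ ih)

theorem isOpen_singleton_of_notMem_derivedSet {K : Type*} [TopologicalSpace K] {x : K}
    (hx : x ∉ derivedSet (Set.univ : Set K)) : IsOpen ({x} : Set K) := by
  rwa [mem_derivedSet, AccPt, Filter.principal_univ, inf_top_eq, Filter.not_neBot,
    ← isOpen_singleton_iff_punctured_nhds] at hx

instance discreteTopology_compl_derivedSet (K : Type*) [TopologicalSpace K] :
    DiscreteTopology ((derivedSet (Set.univ : Set K))ᶜ : Set K) :=
  discreteTopology_iff_isOpen_singleton.2 fun x =>
    ⟨{x.1}, isOpen_singleton_of_notMem_derivedSet x.2, by ext; simp [Subtype.ext_iff]⟩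

variable {K : Type*} [MetricSpace K] [CompactSpace K]

theorem isomorphicToCountableC0_compl_derivedSet :
    IsomorphicToCountableC0 C₀(((derivedSet (Set.univ : Set K))ᶜ : Set K), ℝ) :=
  have : Countable ((derivedSet (Set.univ : Set K))ᶜ : Set K) :=
    TopologicalSpace.separableSpace_iff_countable.1 inferInstance
  isomorphicToCountableC0_c0 _

theorem isomorphicToCountableC0_of_derivedSet_eq_empty (h : derivedSet (Set.univ : Set K) = ∅) :
    IsomorphicToCountableC0 C(K, ℝ) := by
  have hcl := isClosed_derivedSet (Set.univ : Set K)
  have hsurj : Function.Surjective (extendByZero hcl) := fun f =>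
    exists_extendByZero_eq hcl (by simp [h])
  exact isomorphicToCountableC0_compl_derivedSet.of_equiv
    (ContinuousLinearEquiv.ofBijective (extendByZero hcl)
      (LinearMap.ker_eq_bot.2 (extendByZero_injective hcl)) (LinearMap.range_eq_top.2 hsurj)).symm

theorem isomorphicToCountableC0_of_derivedSet_nonempty
    [CompactSpace (derivedSet (Set.univ : Set K))]
    (hne : (derivedSet (Set.univ : Set K)).Nonempty)
    (h : IsomorphicToCountableC0 C(derivedSet (Set.univ : Set K), ℝ)) :
    IsomorphicToCountableC0 C(K, ℝ) := by
  have hcl := isClosed_derivedSet (Set.univ : Set K)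
  obtain ⟨r, hr⟩ := exists_retraction_of_forall_isOpen_singleton hcl.isCompact hne
    fun x => isOpen_singleton_of_notMem_derivedSet
  obtain ⟨e⟩ := nonempty_continuousLinearEquiv_of_retraction hcl r hr
  exact (h.prod isomorphicToCountableC0_compl_derivedSet).of_equiv e

theorem isomorphicToCountableC0_of_cbDeriv_eq_empty {n : ℕ} (h : cbDeriv K n = ∅) :
    IsomorphicToCountableC0 C(K, ℝ) := by
  induction n generalizing K with
  | zero =>
    exact isomorphicToCountableC0_of_derivedSet_eq_empty
      (Set.subset_empty_iff.1 ((Set.subset_univ _).trans h.subset))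
  | succ n ih =>
    rcases (derivedSet (Set.univ : Set K)).eq_empty_or_nonempty with h0 | hne
    · exact isomorphicToCountableC0_of_derivedSet_eq_empty h0
    have : CompactSpace (derivedSet (Set.univ : Set K)) :=
      isCompact_iff_compactSpace.1 (isClosed_derivedSet _).isCompact
    refine isomorphicToCountableC0_of_derivedSet_nonempty hne (ih ?_)
    exact Set.image_eq_empty.1
      (Set.subset_empty_iff.1 ((image_cbDeriv_derivedSet_subset K n).trans h.subset))

theorem cbDeriv_nonempty (hinf : ¬ FiniteDimensional ℝ C(K, ℝ))
    (hniso : IsEmpty (C(K, ℝ) ≃L[ℝ] C₀(ℕ, ℝ))) (n : ℕ) : (cbDeriv K n).Nonempty := by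
  by_contra h
  rcases (isomorphicToCountableC0_of_cbDeriv_eq_empty
    (Set.not_nonempty_iff_eq_empty.1 h)).finiteDimensional_or with hfin | ⟨⟨e⟩⟩
  · exact hinf hfin
  · exact hniso.false e

end CantorBendixson

/-! ### Countable set algebras -/

/-- `X` has the `ω₁`-SVM property with constant `v` (countable set algebras). -/
def HasCountableSVMBound (X : Type*) [SeminormedAddCommGroup X] (v : ℝ) : Prop :=
  ∀ (Ω : Type) (F : Set (Set Ω)), IsSetAlg F → F.Countable →
    ∀ ν : Set Ω → X, OneAdd F ν →
      ∃ μ : Set Ω → X, VectMeas F μ ∧ ∀ A ∈ F, ‖ν A - μ A‖ ≤ v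

section FiniteCofinite

/-- The algebra of finite and cofinite subsets of `α`. -/
def finiteCofinite (α : Type*) : Set (Set α) :=
  Set.range (fun s : Finset α => (s : Set α)) ∪ Set.range fun s : Finset α => (s : Set α)ᶜ

variable {α : Type*}

theorem coe_mem_finiteCofinite (s : Finset α) : (s : Set α) ∈ finiteCofinite α := Or.inl ⟨s, rfl⟩

theorem compl_coe_mem_finiteCofinite (s : Finset α) : (s : Set α)ᶜ ∈ finiteCofinite α :=
  Or.inr ⟨s, rfl⟩

theorem coe_union_compl_coe [DecidableEq α] (s t : Finset α) :
    (s : Set α) ∪ (t : Set α)ᶜ = ((t \ s : Finset α) : Set α)ᶜ := by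
  rw [Finset.coe_sdiff, Set.compl_sdiff]

theorem isSetAlg_finiteCofinite (α : Type*) : IsSetAlg (finiteCofinite α) := by
  classical
  refine ⟨by simpa using coe_mem_finiteCofinite (∅ : Finset α), ?_, ?_⟩
  · rintro _ (⟨s, rfl⟩ | ⟨s, rfl⟩)
    · exact compl_coe_mem_finiteCofinite s
    · simpa using coe_mem_finiteCofinite s
  · rintro _ (⟨s, rfl⟩ | ⟨s, rfl⟩) _ (⟨t, rfl⟩ | ⟨t, rfl⟩)
    · simpa using coe_mem_finiteCofinite (s ∪ t)
    · simpa only [coe_union_compl_coe] using compl_coe_mem_finiteCofinite (t \ s)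
    · simpa only [Set.union_comm (s : Set α)ᶜ, coe_union_compl_coe] using
        compl_coe_mem_finiteCofinite (s \ t)
    · simpa [Set.compl_inter] using compl_coe_mem_finiteCofinite (s ∩ t)

theorem countable_finiteCofinite (α : Type*) [Countable α] : (finiteCofinite α).Countable :=
  (Set.countable_range _).union (Set.countable_range _)

variable {X : Type*}

open Classical in
/-- The extension of a function of finite sets to an odd function of finite and cofinite sets:
a cofinite set is sent to `-g Aᶜ`, as if the whole space were a null set. The value at other sets
is irrelevant. -/
noncomputable def finiteCofiniteExtend [Neg X] (g : Finset α → X) (A : Set α) : X :=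
  if h : A.Finite then g h.toFinset else if h : Aᶜ.Finite then -g h.toFinset else g ∅

theorem finiteCofiniteExtend_coe [Neg X] (g : Finset α → X) (s : Finset α) :
    finiteCofiniteExtend g s = g s := by
  simp [finiteCofiniteExtend]

theorem finiteCofiniteExtend_compl_coe [Infinite α] [Neg X] (g : Finset α → X) (s : Finset α) :
    finiteCofiniteExtend g (s : Set α)ᶜ = -g s := by
  simp [finiteCofiniteExtend, s.finite_toSet.infinite_compl.not_finite]

variable [SeminormedAddCommGroup X]

theorem IsAlmostAdditive.norm_finiteCofiniteExtend_sub_le [Infinite α] [DecidableEq α]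
    {g : Finset α → X} (hg : IsAlmostAdditive 1 g) {s t : Finset α}
    (hst : Disjoint (s : Set α) (t : Set α)ᶜ) :
    ‖finiteCofiniteExtend g (s ∪ (t : Set α)ᶜ) - finiteCofiniteExtend g s -
      finiteCofiniteExtend g (t : Set α)ᶜ‖ ≤ 1 := by
  rw [Set.disjoint_compl_right_iff_subset, Finset.coe_subset] at hst
  have hsplit := hg s (t \ s) Finset.disjoint_sdiff
  rw [Finset.sup_eq_union, Finset.union_sdiff_of_subset hst] at hsplit
  rw [coe_union_compl_coe, finiteCofiniteExtend_coe, finiteCofiniteExtend_compl_coe,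
    finiteCofiniteExtend_compl_coe]
  convert hsplit using 2
  abel

theorem IsAlmostAdditive.oneAdd_finiteCofiniteExtend [Infinite α] [DecidableEq α]
    {g : Finset α → X} (hg : IsAlmostAdditive 1 g) :
    OneAdd (finiteCofinite α) (finiteCofiniteExtend g) := by
  rintro _ (⟨s, rfl⟩ | ⟨s, rfl⟩) _ (⟨t, rfl⟩ | ⟨t, rfl⟩) hst
  · simp only [← Finset.coe_union, finiteCofiniteExtend_coe]
    exact hg s t (Finset.disjoint_coe.1 hst)
  · exact hg.norm_finiteCofiniteExtend_sub_le hst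
  · simp only
    rw [Set.union_comm, sub_right_comm]
    exact hg.norm_finiteCofiniteExtend_sub_le hst.symm
  · obtain ⟨x, hx⟩ := Infinite.exists_notMem_finset (s ∪ t)
    rw [Finset.mem_union, not_or] at hx
    exact (Set.disjoint_left.1 hst (Finset.mem_coe.not.2 hx.1) (Finset.mem_coe.not.2 hx.2)).elim

theorem VectMeas.apply_coe_finset {Y : Type*} [AddCommGroup Y] {μ : Set α → Y}
    (hμ : VectMeas (finiteCofinite α) μ) (s : Finset α) : μ s = ∑ t ∈ s, μ {t} := by
  classical
  have hmem := coe_mem_finiteCofinite (α := α)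
  induction s using Finset.induction_on with
  | empty => simpa using hμ ∅ (by simpa using hmem ∅) ∅ (by simpa using hmem ∅) (by simp)
  | insert a s ha ih =>
    rw [Finset.sum_insert ha, Finset.coe_insert, Set.insert_eq,
      hμ {a} (by simpa using hmem {a}) s (hmem s) (by simpa using ha), ih]

theorem HasCountableSVMBound.exists_norm_sub_sum_le {α : Type} [Countable α] [Infinite α]
    [DecidableEq α] {v : ℝ} (hX : HasCountableSVMBound X v) {g : Finset α → X}
    (hg : IsAlmostAdditive 1 g) : ∃ h : α → X, ∀ s, ‖g s - ∑ t ∈ s, h t‖ ≤ v := by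
  obtain ⟨μ, hμ, hμ_near⟩ := hX α _ (isSetAlg_finiteCofinite α) (countable_finiteCofinite α) _
    hg.oneAdd_finiteCofiniteExtend
  refine ⟨fun t => μ {t}, fun s => ?_⟩
  rw [← hμ.apply_coe_finset, ← finiteCofiniteExtend_coe g]
  exact hμ_near _ (coe_mem_finiteCofinite s)

end FiniteCofinite

/-! ### Trees of balls -/

section DisjointBalls

theorem lt_half_of_lt_of_halving {d : ℕ → ℝ} (hd : ∀ k, 0 < d k)
    (hhalf : ∀ k, d (k + 1) < d k / 2) {j k : ℕ} (hjk : j < k) : d k < d j / 2 := by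
  have hanti : StrictAnti d := strictAnti_nat_of_succ_lt fun k => by linarith [hhalf k, hd k]
  exact (hanti.antitone (Nat.succ_le_of_lt hjk)).trans_lt (hhalf j)

theorem tendsto_zero_of_halving {d : ℕ → ℝ} (hd : ∀ k, 0 < d k)
    (hhalf : ∀ k, d (k + 1) < d k / 2) : Filter.Tendsto d Filter.atTop (nhds 0) := by
  have hgeo (k : ℕ) : d k ≤ d 0 * (1 / 2) ^ k := by
    induction k with
    | zero => simp
    | succ k ih => rw [pow_succ]; linarith [hhalf k]
  refine squeeze_zero (fun k => (hd k).le) hgeo ?_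
  simpa using (tendsto_pow_atTop_nhds_zero_of_lt_one (r := (1 / 2 : ℝ)) (by norm_num)
    (by norm_num)).const_mul (d 0)

variable {K : Type*} [MetricSpace K] {A : Set K} {x : K}

theorem exists_mem_dist_lt_of_mem_derivedSet (hx : x ∈ derivedSet A) {ε : ℝ} (hε : 0 < ε) :
    ∃ y ∈ A, 0 < dist y x ∧ dist y x < ε := by
  rw [mem_derivedSet, accPt_iff_nhds] at hx
  obtain ⟨y, ⟨hyε, hyA⟩, hne⟩ := hx (Metric.ball x ε) (Metric.ball_mem_nhds x hε)
  exact ⟨y, hyA, dist_pos.2 hne, hyε⟩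

theorem exists_halving_seq_of_mem_derivedSet (hx : x ∈ derivedSet A) {ε : ℝ} (hε : 0 < ε) :
    ∃ u : ℕ → K, (∀ k, u k ∈ A) ∧ (∀ k, 0 < dist (u k) x) ∧ dist (u 0) x < ε ∧
      ∀ k, dist (u (k + 1)) x < dist (u k) x / 2 := by
  have hstep (y : {y // y ∈ A ∧ 0 < dist y x}) :
      ∃ z : {y // y ∈ A ∧ 0 < dist y x}, dist z.1 x < dist y.1 x / 2 :=
    let ⟨z, hzA, hz_pos, hz_lt⟩ := exists_mem_dist_lt_of_mem_derivedSet hx (half_pos y.2.2)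
    ⟨⟨z, hzA, hz_pos⟩, hz_lt⟩
  choose next hnext using hstep
  obtain ⟨y, hyA, hy_pos, hy_lt⟩ := exists_mem_dist_lt_of_mem_derivedSet hx hε
  let u (k : ℕ) := next^[k] ⟨y, hyA, hy_pos⟩
  refine ⟨fun k => u k, fun k => (u k).2.1, fun k => (u k).2.2, hy_lt, fun k => ?_⟩
  have hu : u (k + 1) = next (u k) := Function.iterate_succ_apply' _ _ _
  simpa only [hu] using hnext (u k)

/-- With radii `dist (u k) x / 4` the balls lie in disjoint annuli around `x`. -/
theorem exists_disjoint_balls_of_mem_derivedSet (hx : x ∈ derivedSet A) {r : ℝ} (hr : 0 < r) :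
    ∃ (u : ℕ → K) (ρ : ℕ → ℝ), (∀ k, u k ∈ A) ∧ (∀ k, 0 < ρ k) ∧
      (∀ k, Metric.ball (u k) (ρ k) ⊆ Metric.ball x r) ∧
      Pairwise (fun j k => Disjoint (Metric.ball (u j) (ρ j)) (Metric.ball (u k) (ρ k))) ∧
      Filter.Tendsto u Filter.atTop (nhds x) := by
  obtain ⟨u, huA, hu_pos, hu_zero, hhalf⟩ := exists_halving_seq_of_mem_derivedSet hx (half_pos hr)
  have hlt {j k : ℕ} (hjk : j < k) : dist (u k) x < dist (u j) x / 2 :=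
    lt_half_of_lt_of_halving hu_pos hhalf hjk
  refine ⟨u, fun k => dist (u k) x / 4, huA, fun k => by linarith [hu_pos k], fun k y hy => ?_,
    (pairwise_disjoint_on _).2 fun j k hjk => ?_,
    tendsto_iff_dist_tendsto_zero.2 (tendsto_zero_of_halving hu_pos hhalf)⟩
  · have hk : dist (u k) x < r / 2 := by
      rcases k.eq_zero_or_pos with rfl | hk
      · exact hu_zero
      · linarith [hlt hk, hu_pos 0]
    rw [Metric.mem_ball] at *
    linarith [dist_triangle y (u k) x]
  · refine Set.disjoint_left.2 fun y hyj hyk => ?_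
    rw [Metric.mem_ball] at *
    linarith [dist_triangle y (u k) x, dist_triangle_left (u j) x y, hlt hjk, hu_pos k]

end DisjointBalls

/-- A tree of balls in `K`, indexed by finite lists of naturals, the children of `s` being `k :: s`.
Children lie in the ball of half the radius around the centre of their parent, and siblings are
disjoint. Down to level `n` the tree is nondegenerate: the balls are nonempty and the centres of
the children converge to the centre of the parent. Below level `n` balls may be empty. -/
structure BallTree (K : Type*) [PseudoMetricSpace K] (n : ℕ) where
  centre : List ℕ → K
  radius : List ℕ → ℝ
  radius_nonneg : ∀ s, 0 ≤ radius s
  ball_cons_subset : ∀ s k,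
    Metric.ball (centre (k :: s)) (radius (k :: s)) ⊆ Metric.ball (centre s) (radius s / 2)
  pairwise_disjoint_cons : ∀ s, Pairwise fun j k =>
    Disjoint (Metric.ball (centre (j :: s)) (radius (j :: s)))
      (Metric.ball (centre (k :: s)) (radius (k :: s)))
  radius_pos : ∀ s, s.length ≤ n → 0 < radius s
  tendsto_centre : ∀ s, s.length < n →
    Filter.Tendsto (fun k => centre (k :: s)) Filter.atTop (nhds (centre s))

section Existence

variable {K : Type*} [MetricSpace K]

/-- Children of a ball that need not have any: if `x` is not an accumulation point of `A`, all
children are empty. -/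
theorem exists_children (A : Set K) (x : K) (r : ℝ) :
    ∃ (u : ℕ → K) (ρ : ℕ → ℝ), (∀ k, 0 ≤ ρ k) ∧
      (∀ k, Metric.ball (u k) (ρ k) ⊆ Metric.ball x (r / 2)) ∧
      Pairwise (fun j k => Disjoint (Metric.ball (u j) (ρ j)) (Metric.ball (u k) (ρ k))) ∧
      (x ∈ derivedSet A → 0 < r →
        (∀ k, u k ∈ A ∧ 0 < ρ k) ∧ Filter.Tendsto u Filter.atTop (nhds x)) := by
  by_cases hx : x ∈ derivedSet A ∧ 0 < r
  · obtain ⟨u, ρ, huA, hρ, hsub, hdisj, hlim⟩ :=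
      exists_disjoint_balls_of_mem_derivedSet hx.1 (half_pos hx.2)
    exact ⟨u, ρ, fun k => (hρ k).le, hsub, hdisj, fun _ _ => ⟨fun k => ⟨huA k, hρ k⟩, hlim⟩⟩
  · exact ⟨fun _ => x, fun _ => 0, fun _ => le_rfl, by simp, fun _ _ _ => by simp,
      fun hxA hr => (hx ⟨hxA, hr⟩).elim⟩

/-- The centres at level `i` are taken in the derived set of order `n - i`. -/
theorem nonempty_ballTree {n : ℕ} (hne : (cbDeriv K n).Nonempty) : Nonempty (BallTree K n) := by
  obtain ⟨x₀, hx₀⟩ := hne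
  choose u ρ hρ hsub hdisj hgood using fun m => exists_children (cbDeriv K m)
  let node (s : List ℕ) : K × ℝ :=
    s.rec (x₀, 1) fun k t p => (u (n - t.length - 1) p.1 p.2 k, ρ (n - t.length - 1) p.1 p.2 k)
  have hlevel {s : List ℕ} (hs : s.length < n) : n - s.length - 1 + 1 = n - s.length := by lia
  have hnode (s : List ℕ) (hs : s.length ≤ n) :
      (node s).1 ∈ cbDeriv K (n - s.length) ∧ 0 < (node s).2 := by
    induction s with
    | nil => exact ⟨hx₀, one_pos⟩
    | cons k t ih =>
      obtain ⟨hmem, hpos⟩ := ih (Nat.le_of_succ_le hs)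
      rw [← hlevel hs] at hmem
      rw [List.length_cons, ← Nat.sub_sub]
      exact (hgood _ _ _ hmem hpos).1 k
  have hderived (s : List ℕ) (hs : s.length < n) :
      (node s).1 ∈ derivedSet (cbDeriv K (n - s.length - 1)) := by
    have hmem := (hnode s hs.le).1
    rw [← hlevel hs] at hmem
    exact hmem
  exact ⟨{
    centre := fun s => (node s).1
    radius := fun s => (node s).2
    radius_nonneg := fun
      | [] => zero_le_one
      | k :: t => hρ _ _ _ k
    ball_cons_subset := fun s => hsub _ _ _
    pairwise_disjoint_cons := fun s => hdisj _ _ _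
    radius_pos := fun s hs => (hnode s hs).2
    tendsto_centre := fun s hs => (hgood _ _ _ (hderived s hs) (hnode s hs.le).2).2 }⟩

end Existence

section BallBump

variable {K : Type*} [PseudoMetricSpace K]

/-- The continuous cutoff of the ball of radius `r` around `x`: it vanishes off the ball and equals
`1` on the ball of half the radius. For `r = 0` the quotient is `0` by convention, so the function
vanishes identically, in accordance with the ball being empty. -/
noncomputable def ballBump (x : K) (r : ℝ) : C(K, ℝ) where
  toFun y := max 0 (min 1 ((2 * r - 2 * dist y x) / r))
  continuous_toFun := by fun_prop

theorem ballBump_apply (x : K) (r : ℝ) (y : K) :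
    ballBump x r y = max 0 (min 1 ((2 * r - 2 * dist y x) / r)) := rfl

theorem abs_ballBump_le_one (x : K) (r : ℝ) (y : K) : |ballBump x r y| ≤ 1 := by
  rw [ballBump_apply, abs_of_nonneg (le_max_left _ _)]
  exact max_le zero_le_one (min_le_left _ _)

theorem ballBump_eq_zero {x y : K} {r : ℝ} (hr : 0 ≤ r) (hy : y ∉ Metric.ball x r) :
    ballBump x r y = 0 := by
  rw [Metric.mem_ball, not_lt] at hy
  exact max_eq_left ((min_le_right _ _).trans (div_nonpos_of_nonpos_of_nonneg (by linarith) hr))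

theorem ballBump_eq_one {x y : K} {r : ℝ} (hy : y ∈ Metric.ball x (r / 2)) :
    ballBump x r y = 1 := by
  have hr : 0 < r := by linarith [Metric.pos_of_mem_ball hy]
  rw [Metric.mem_ball] at hy
  have hquot : 1 ≤ (2 * r - 2 * dist y x) / r := by
    rw [le_div_iff₀ hr]
    linarith
  rw [ballBump_apply, min_eq_left hquot, max_eq_right zero_le_one]

end BallBump

theorem norm_sum_le_of_subsingleton_support {ι X : Type*} [SeminormedAddCommGroup X]
    {s : Finset ι} {f : ι → X} {c : ℝ} (hc : 0 ≤ c) (hf : ∀ i ∈ s, ‖f i‖ ≤ c)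
    (hsupp : ∀ i ∈ s, ∀ j ∈ s, f i ≠ 0 → f j ≠ 0 → i = j) : ‖∑ i ∈ s, f i‖ ≤ c := by
  by_cases hzero : ∀ i ∈ s, f i = 0
  · rwa [Finset.sum_eq_zero hzero, norm_zero]
  · push Not at hzero
    obtain ⟨i, hi, hfi⟩ := hzero
    rw [Finset.sum_eq_single_of_mem i hi fun j hj hji =>
      not_not.1 fun hfj => hji (hsupp j hj i hi hfj hfi)]
    exact hf i hi

/-- A number exceeding all entries of the lists in `A`. -/
def cutoff (A : Finset (List ℕ)) : ℕ :=
  A.sup fun s => s.sum + 1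

theorem lt_cutoff {A : Finset (List ℕ)} {s : List ℕ} (hs : s ∈ A) {k : ℕ} (hk : k ∈ s) :
    k < cutoff A :=
  (Nat.lt_succ_of_le (List.le_sum_of_mem hk)).trans_le
    (Finset.le_sup (f := fun s : List ℕ => s.sum + 1) hs)

theorem cons_eq_cons_of_suffix_of_cutoff_le {A : Finset (List ℕ)} {s t : List ℕ} {j k : ℕ}
    (ht : t ∈ A) (hj : cutoff A ≤ j) (hsuff : j :: s <:+ k :: t) : j :: s = k :: t :=
  (List.suffix_cons_iff.1 hsuff).resolve_right fun h =>
    (lt_cutoff ht (h.subset List.mem_cons_self)).not_ge hj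

/-- The nodes which the branch of `s` leaves through a child whose index has parity `e`. -/
def parityChain (e : ℕ) : List ℕ → Finset (List ℕ)
  | [] => ∅
  | k :: t => if k % 2 = e then insert t (parityChain e t) else parityChain e t

theorem exists_cons_suffix_of_mem_parityChain {e : ℕ} {s t : List ℕ} (ht : t ∈ parityChain e s) :
    ∃ k, k % 2 = e ∧ k :: t <:+ s := by
  induction s with
  | nil => simp [parityChain] at ht
  | cons j s ih =>
    have hcases : (t = s ∧ j % 2 = e) ∨ t ∈ parityChain e s := by
      rw [parityChain] at ht
      split_ifs at ht with hj
      · exact (Finset.mem_insert.1 ht).imp_left fun hts => ⟨hts, hj⟩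
      · exact Or.inr ht
    rcases hcases with ⟨rfl, hj⟩ | ht
    · exact ⟨j, hj, List.suffix_rfl⟩
    · obtain ⟨k, hk, hsuff⟩ := ih ht
      exact ⟨k, hk, hsuff.trans (List.suffix_cons j s)⟩

theorem notMem_parityChain_self (e : ℕ) (s : List ℕ) : s ∉ parityChain e s := fun hs => by
  obtain ⟨k, -, hsuff⟩ := exists_cons_suffix_of_mem_parityChain hs
  simpa using hsuff.length_le

theorem card_parityChain_zero_add_one (s : List ℕ) :
    (parityChain 0 s).card + (parityChain 1 s).card = s.length := by
  induction s with
  | nil => rfl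
  | cons j s ih =>
    rcases Nat.mod_two_eq_zero_or_one j with hj | hj <;>
      simp [parityChain, hj, Finset.card_insert_of_notMem (notMem_parityChain_self _ s)] <;> lia

/-- The points at which, for every node `t` on the branch of `s`, the function `h t` is not
substantially positively correlated with the sign `(-1) ^ k` of the child `k :: t` through which
the branch leaves `t`. -/
def opposed {K : Type*} [TopologicalSpace K] (h : List ℕ → C(K, ℝ)) (s : List ℕ) : Set K :=
  {y | ∀ k t, k :: t <:+ s → (-1) ^ k * h t y < 1 / 4}

section Opposed

variable {K : Type*} [TopologicalSpace K] (h : List ℕ → C(K, ℝ))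

theorem opposed_nil : opposed h [] = Set.univ := by
  simp [opposed]

theorem opposed_cons (j : ℕ) (s : List ℕ) :
    opposed h (j :: s) = {y | (-1) ^ j * h s y < 1 / 4} ∩ opposed h s := by
  ext y
  simp only [opposed, List.suffix_cons_iff, Set.mem_inter_iff, Set.mem_ofPred_eq, List.cons.injEq]
  refine ⟨fun H => ⟨H j s (Or.inl ⟨rfl, rfl⟩), fun k t hk => H k t (Or.inr hk)⟩, ?_⟩
  rintro ⟨hj, hs⟩ k t (⟨rfl, rfl⟩ | hk)
  · exact hj
  · exact hs k t hk

theorem isOpen_opposed (s : List ℕ) : IsOpen (opposed h s) := by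
  induction s with
  | nil => exact opposed_nil h ▸ isOpen_univ
  | cons j s ih =>
    rw [opposed_cons]
    exact (isOpen_lt (by fun_prop) continuous_const).inter ih

theorem exists_neg_one_pow_mul_nonpos (z : ℝ) : ∃ e : ℕ, (-1) ^ e * z ≤ 0 := by
  rcases le_total z 0 with hz | hz
  · exact ⟨0, by simpa using hz⟩
  · exact ⟨1, by simpa using hz⟩

theorem sum_parityChain_apply_le {s : List ℕ} {y : K} (hy : y ∈ opposed h s) (e : ℕ) :
    (-1) ^ e * ∑ t ∈ parityChain e s, h t y ≤ (parityChain e s).card / 4 := by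
  rw [Finset.mul_sum, div_eq_mul_one_div, ← nsmul_eq_mul]
  refine Finset.sum_le_card_nsmul _ _ _ fun t ht => ?_
  obtain ⟨k, rfl, hsuff⟩ := exists_cons_suffix_of_mem_parityChain ht
  rw [← neg_one_pow_eq_pow_mod_two]
  exact (hy k t hsuff).le

end Opposed

namespace BallTree

variable {K : Type*} [PseudoMetricSpace K] {n : ℕ} (T : BallTree K n)

/-- The ball at the node `s`. -/
def ball (s : List ℕ) : Set K :=
  Metric.ball (T.centre s) (T.radius s)

/-- The concentric ball of half the radius at the node `s`. -/
def halfBall (s : List ℕ) : Set K :=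
  Metric.ball (T.centre s) (T.radius s / 2)

/-- The bump function at the node `s`, supported in `T.ball s` and equal to `1` on
`T.halfBall s`. -/
noncomputable def bump (s : List ℕ) : C(K, ℝ) :=
  ballBump (T.centre s) (T.radius s)

theorem bump_eq_zero {s : List ℕ} {y : K} (hy : y ∉ T.ball s) : T.bump s y = 0 :=
  ballBump_eq_zero (T.radius_nonneg s) hy

theorem bump_eq_one {s : List ℕ} {y : K} (hy : y ∈ T.halfBall s) : T.bump s y = 1 :=
  ballBump_eq_one hy

theorem halfBall_subset_ball (s : List ℕ) : T.halfBall s ⊆ T.ball s :=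
  Metric.ball_subset_ball (half_le_self (T.radius_nonneg s))

theorem centre_mem_halfBall {s : List ℕ} (hs : s.length ≤ n) : T.centre s ∈ T.halfBall s :=
  Metric.mem_ball_self (half_pos (T.radius_pos s hs))

theorem ball_subset_of_suffix {s t : List ℕ} (h : s <:+ t) : T.ball t ⊆ T.ball s := by
  obtain ⟨l, rfl⟩ := h
  induction l with
  | nil => exact subset_rfl
  | cons k l ih => exact ((T.ball_cons_subset _ k).trans (T.halfBall_subset_ball _)).trans ih

theorem halfBall_subset_of_suffix {s t : List ℕ} (h : s <:+ t) : T.halfBall t ⊆ T.halfBall s := by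
  obtain ⟨l, rfl⟩ := h
  induction l with
  | nil => exact subset_rfl
  | cons k l ih => exact ((T.halfBall_subset_ball _).trans (T.ball_cons_subset _ k)).trans ih

theorem eq_of_mem_ball_cons {s : List ℕ} {j k : ℕ} {y : K} (hj : y ∈ T.ball (j :: s))
    (hk : y ∈ T.ball (k :: s)) : j = k :=
  by_contra fun hne => Set.disjoint_left.1 (T.pairwise_disjoint_cons s hne) hj hk

theorem suffix_or_suffix_of_mem_ball {y : K} {s t : List ℕ} (hs : y ∈ T.ball s)
    (ht : y ∈ T.ball t) : s <:+ t ∨ t <:+ s := by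
  induction s with
  | nil => exact Or.inl List.nil_suffix
  | cons j s ih =>
    rcases ih (T.ball_subset_of_suffix (List.suffix_cons j s) hs) with ⟨l, rfl⟩ | hts
    · rcases List.eq_nil_or_concat' l with rfl | ⟨l, i, rfl⟩
      · exact Or.inr (List.suffix_cons j s)
      · have hsuff : i :: s <:+ (l ++ [i]) ++ s := ⟨l, by simp⟩
        obtain rfl := T.eq_of_mem_ball_cons (T.ball_subset_of_suffix hsuff ht) hs
        exact Or.inl hsuff
    · exact Or.inr (hts.trans (List.suffix_cons j s))

theorem cons_eq_cons_of_mem_ball {A : Finset (List ℕ)} {s t : List ℕ} {j k : ℕ} (hs : s ∈ A)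
    (ht : t ∈ A) (hj : cutoff A ≤ j) (hk : cutoff A ≤ k) {y : K} (hys : y ∈ T.ball (j :: s))
    (hyt : y ∈ T.ball (k :: t)) : j :: s = k :: t := by
  rcases T.suffix_or_suffix_of_mem_ball hys hyt with hsuff | hsuff
  · exact cons_eq_cons_of_suffix_of_cutoff_le ht hj hsuff
  · exact (cons_eq_cons_of_suffix_of_cutoff_le hs hk hsuff).symm

/-- The parity of `k` is chosen against the sign of `h s` at the centre of `s`, and `k` so large
that the strict inequalities defining `opposed h s` persist. -/
theorem exists_centre_cons_mem_opposed (h : List ℕ → C(K, ℝ)) {s : List ℕ} (hs : s.length < n)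
    (hopp : T.centre s ∈ opposed h s) : ∃ k, T.centre (k :: s) ∈ opposed h (k :: s) := by
  obtain ⟨e, he⟩ := exists_neg_one_pow_mul_nonpos (h s (T.centre s))
  have hopen : IsOpen ({y | (-1) ^ e * h s y < 1 / 4} ∩ opposed h s) :=
    (isOpen_lt (by fun_prop) continuous_const).inter (isOpen_opposed h s)
  have hmem : T.centre s ∈ {y | (-1) ^ e * h s y < 1 / 4} ∩ opposed h s :=
    ⟨he.trans_lt (by norm_num), hopp⟩
  obtain ⟨N, hN⟩ := Filter.eventually_atTop.1
    ((T.tendsto_centre s hs).eventually (hopen.mem_nhds hmem))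
  have hsign : (-1 : ℝ) ^ (2 * N + e) = (-1) ^ e := by simp [pow_add, pow_mul]
  refine ⟨2 * N + e, ?_⟩
  rw [opposed_cons, hsign]
  exact hN _ (by lia)

theorem exists_branch (h : List ℕ → C(K, ℝ)) {i : ℕ} (hi : i ≤ n) :
    ∃ s : List ℕ, s.length = i ∧ T.centre s ∈ opposed h s := by
  induction i with
  | zero => exact ⟨[], rfl, opposed_nil h ▸ Set.mem_univ _⟩
  | succ i ih =>
    obtain ⟨s, rfl, hopp⟩ := ih (Nat.le_of_succ_le hi)
    obtain ⟨k, hk⟩ := T.exists_centre_cons_mem_opposed h hi hopp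
    exact ⟨k :: s, rfl, hk⟩

/-- The alternating sum of the bumps at the first `M` children of the nodes in `A`. -/
noncomputable def altSum (A : Finset (List ℕ)) (M : ℕ) : C(K, ℝ) :=
  ∑ s ∈ A, ∑ k ∈ Finset.range M, (-1 : ℝ) ^ k • T.bump (k :: s)

theorem altSum_apply (A : Finset (List ℕ)) (M : ℕ) (y : K) :
    T.altSum A M y = ∑ s ∈ A, ∑ k ∈ Finset.range M, (-1) ^ k * T.bump (k :: s) y := by
  simp [altSum]

theorem altSum_union {A B : Finset (List ℕ)} (hAB : Disjoint A B) (M : ℕ) :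
    T.altSum (A ∪ B) M = T.altSum A M + T.altSum B M :=
  Finset.sum_union hAB

theorem altSum_sub_altSum_apply (A : Finset (List ℕ)) {N M : ℕ} (hNM : N ≤ M) (y : K) :
    (T.altSum A M - T.altSum A N) y =
      ∑ p ∈ A ×ˢ Finset.Ico N M, (-1) ^ p.2 * T.bump (p.2 :: p.1) y := by
  rw [Finset.sum_product, ContinuousMap.sub_apply, altSum_apply, altSum_apply,
    ← Finset.sum_sub_distrib]
  simp only [← Finset.sum_Ico_eq_sub _ hNM]

/-- Half the alternating sum over the children up to the cutoff: an almost additive set function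
that is far from every additive one when the tree is deep. -/
noncomputable def setFun (A : Finset (List ℕ)) : C(K, ℝ) :=
  (1 / 2 : ℝ) • T.altSum A (cutoff A)

/-- Every node `t` of the chain has exactly one child whose ball contains `y`, namely the one on
the branch of `s`. -/
theorem altSum_parityChain_apply {s : List ℕ} {y : K} (hy : y ∈ T.halfBall s) (e : ℕ) {M : ℕ}
    (hM : s.sum < M) :
    T.altSum (parityChain e s) M y = (-1) ^ e * (parityChain e s).card := by
  have hnode : ∀ t ∈ parityChain e s,
      ∑ k ∈ Finset.range M, (-1) ^ k * T.bump (k :: t) y = (-1) ^ e := fun t ht => by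
    obtain ⟨k, rfl, hsuff⟩ := exists_cons_suffix_of_mem_parityChain ht
    have hyk : y ∈ T.halfBall (k :: t) := T.halfBall_subset_of_suffix hsuff hy
    have hkM : k < M := (List.le_sum_of_mem (hsuff.subset List.mem_cons_self)).trans_lt hM
    rw [Finset.sum_eq_single_of_mem k (Finset.mem_range.2 hkM), T.bump_eq_one hyk, mul_one,
      neg_one_pow_eq_pow_mod_two]
    intro j _ hjk
    rw [T.bump_eq_zero fun hyj => hjk (T.eq_of_mem_ball_cons hyj (T.halfBall_subset_ball _ hyk)),
      mul_zero]
  rw [altSum_apply, Finset.sum_congr rfl hnode, Finset.sum_const, nsmul_eq_mul, mul_comm]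

variable [CompactSpace K]

/-- Beyond the cutoff the children of the nodes in `A` have pairwise disjoint balls. -/
theorem norm_altSum_sub_altSum_cutoff_le (A : Finset (List ℕ)) {M : ℕ} (hM : cutoff A ≤ M) :
    ‖T.altSum A M - T.altSum A (cutoff A)‖ ≤ 1 := by
  refine (ContinuousMap.norm_le _ zero_le_one).2 fun y => ?_
  rw [T.altSum_sub_altSum_apply A hM]
  refine norm_sum_le_of_subsingleton_support zero_le_one (fun p _ => ?_) ?_
  · simpa [bump] using abs_ballBump_le_one _ _ y
  · have hball {p : List ℕ × ℕ} (hp : (-1) ^ p.2 * T.bump (p.2 :: p.1) y ≠ 0) :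
        y ∈ T.ball (p.2 :: p.1) :=
      not_not.1 fun hy => right_ne_zero_of_mul hp (T.bump_eq_zero hy)
    intro p hp q hq hpy hqy
    rw [Finset.mem_product, Finset.mem_Ico] at hp hq
    obtain ⟨hk, hs⟩ := List.cons.inj
      (T.cons_eq_cons_of_mem_ball hp.1 hq.1 hp.2.1 hq.2.1 (hball hpy) (hball hqy))
    exact Prod.ext hs hk

theorem isAlmostAdditive_setFun : IsAlmostAdditive 1 T.setFun := fun A B hAB => by
  let M := cutoff (A ∪ B)
  have hA : ‖T.altSum A M - T.altSum A (cutoff A)‖ ≤ 1 :=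
    T.norm_altSum_sub_altSum_cutoff_le A (Finset.sup_mono Finset.subset_union_left)
  have hB : ‖T.altSum B M - T.altSum B (cutoff B)‖ ≤ 1 :=
    T.norm_altSum_sub_altSum_cutoff_le B (Finset.sup_mono Finset.subset_union_right)
  have hsplit : T.setFun (A ⊔ B) - T.setFun A - T.setFun B = (1 / 2 : ℝ) •
      ((T.altSum A M - T.altSum A (cutoff A)) + (T.altSum B M - T.altSum B (cutoff B))) := by
    rw [Finset.sup_eq_union, setFun, T.altSum_union hAB, setFun, setFun]
    module
  rw [hsplit, norm_smul, Real.norm_of_nonneg (by norm_num)]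
  linarith [norm_add_le (T.altSum A M - T.altSum A (cutoff A))
    (T.altSum B M - T.altSum B (cutoff B))]

/-- At `y`, and up to the sign `(-1) ^ e`, the set function is at least `(card - 1) / 2` on the
chain, whereas `∑ h t` is at most `card / 4`. -/
theorem card_parityChain_le {h : List ℕ → C(K, ℝ)} {v : ℝ}
    (hv : ∀ A, ‖T.setFun A - ∑ t ∈ A, h t‖ ≤ v) {s : List ℕ} {y : K} (hy : y ∈ T.halfBall s)
    (hopp : y ∈ opposed h s) (e : ℕ) : ((parityChain e s).card : ℝ) ≤ 4 * v + 2 := by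
  let A := parityChain e s
  let M := max (cutoff A) (s.sum + 1)
  have hsign_le (f : C(K, ℝ)) : (-1) ^ e * f y ≤ ‖f‖ := by
    refine (le_abs_self _).trans ?_
    simpa [abs_mul] using f.norm_coe_le_norm y
  have htrunc : (-1) ^ e * (T.altSum A M y - T.altSum A (cutoff A) y) ≤ 1 :=
    (hsign_le (_ - _)).trans (T.norm_altSum_sub_altSum_cutoff_le A (le_max_left _ _))
  have hnear : (-1) ^ e * (1 / 2 * T.altSum A (cutoff A) y - ∑ t ∈ A, h t y) ≤ v := by
    simpa [setFun] using (hsign_le _).trans (hv A)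
  have hmeas : (-1) ^ e * ∑ t ∈ A, h t y ≤ A.card / 4 := sum_parityChain_apply_le h hopp e
  have hsq : (-1 : ℝ) ^ e * (-1) ^ e = 1 := by simp [← mul_pow]
  rw [T.altSum_parityChain_apply hy e (Nat.lt_of_succ_le (le_max_right _ _)), mul_sub, ← mul_assoc,
    hsq] at htrunc
  rw [mul_sub] at hnear
  linarith

end BallTree

theorem not_hasCountableSVMBound_continuousMap {K : Type*} [MetricSpace K] [CompactSpace K]
    (hne : ∀ n, (cbDeriv K n).Nonempty) (v : ℝ) : ¬ HasCountableSVMBound C(K, ℝ) v := by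
  intro hv
  obtain ⟨n, hn⟩ := exists_nat_gt (8 * v + 4)
  obtain ⟨T⟩ := nonempty_ballTree (hne n)
  obtain ⟨h, hh⟩ := hv.exists_norm_sub_sum_le T.isAlmostAdditive_setFun
  obtain ⟨s, hs, hopp⟩ := T.exists_branch h le_rfl
  have hcard (e : ℕ) : ((parityChain e s).card : ℝ) ≤ 4 * v + 2 :=
    T.card_parityChain_le hh (T.centre_mem_halfBall hs.le) hopp e
  have hsum : ((parityChain 0 s).card : ℝ) + (parityChain 1 s).card = n := by
    exact_mod_cast (card_parityChain_zero_add_one s).trans hs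
  linarith [hcard 0, hcard 1]

/-- if Ω₀ is a compact metric space with C(Ω₀, ℝ)
infinite-dimensional and not isomorphic to c₀, then C(Ω₀, ℝ) has the ω-SVM
property but fails the ω₁-SVM property. -/
theorem stmt_10 (Ω₀ : Type) [MetricSpace Ω₀] [CompactSpace Ω₀]
    (hinf : ¬ FiniteDimensional ℝ (ContinuousMap Ω₀ ℝ))
    (hniso : IsEmpty (ContinuousMap Ω₀ ℝ ≃L[ℝ] ZeroAtInftyContinuousMap ℕ ℝ)) :
    (∃ v : ℝ, HasOmegaSVMBound (ContinuousMap Ω₀ ℝ) v) ∧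
    ¬ ∃ v : ℝ, ∀ (Ω : Type) (F : Set (Set Ω)), IsSetAlg F → F.Countable →
        ∀ ν : Set Ω → ContinuousMap Ω₀ ℝ, OneAdd F ν →
          ∃ μ : Set Ω → ContinuousMap Ω₀ ℝ, VectMeas F μ ∧ ∀ A ∈ F, ‖ν A - μ A‖ ≤ v :=
  ⟨⟨210, hasOmegaSVMBound_continuousMap Ω₀⟩, fun ⟨v, hv⟩ =>
    not_hasCountableSVMBound_continuousMap (cbDeriv_nonempty hinf hniso) v hv⟩
end

section
/- Let K be a Kalton–Roberts constant and let Γ be an infinite cardinal with cofinality cf(Γ). Then m₀(Γ) has the cf(Γ)⁺-SVM property with constant v for every v > 16K: for every v > 16K, every set algebra F of cardinality at most cf(Γ), and every 1-additive ν : F → m₀(Γ), there exists a vector measure μ : F → m₀(Γ) with ‖ν(A) − μ(A)‖ ≤ v for all A ∈ F. -/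
open Cardinal ENNReal

/-- The subspace m₀(Γ) of ℓ∞(Γ): functions x such that for every ε > 0 the set
of coordinates with |x γ| ≥ ε has cardinality less than #Γ. -/
noncomputable def mZero (Γ : Type) : Submodule ℝ ↥(lp (fun _ : Γ => ℝ) ⊤) :=
  Submodule.span ℝ {x | ∀ ε : ℝ, 0 < ε → #(↥{γ : Γ | ε ≤ |x γ|}) < #Γ}

/-!
Each coordinate `ν_γ` of `ν` lies within `K` of a real measure `m_γ`, and these measures have to be
corrected so that every `A ∈ F` is sent into `m₀(Γ)`.

Well-order `F` in type at most `cf(Γ)`. The algebras generated by the initial segments form a chain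
`𝒮` of subalgebras with fewer than `cf(Γ)` elements each, covering `F`. Fix `δ > 0`. For a
coordinate `γ`, let `G_γ` be the union of those `S ∈ 𝒮` on which `|ν_γ| ≤ δ`. If there are any, it
is an algebra with `|m_γ| ≤ K + δ` on it, so `m_γ` restricted to `G_γ` extends to a measure `l_γ` on
all subsets of `Ω` which is bounded by `K + δ`. Now `m_γ - l_γ` vanishes on `G_γ` and is within
`2K + δ` of `ν_γ`. If `A ∈ S ∈ 𝒮`, the coordinates where it does not vanish at `A` lie in the union
of the sets `{γ | δ ≤ |ν_γ(C)|}`, `C ∈ S`: fewer than `cf(Γ)` sets of cardinality `< #Γ`.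

The extension `l_γ` is a limit along an ultrafilter on the finite `P ⊆ G_γ`. Choosing a point in
each atom of the algebra generated by `P` gives a retraction `r` of `Ω` whose preimages lie in that
algebra, so that `A ↦ m_γ(r⁻¹(A))` is a measure on all subsets of `Ω` agreeing with `m_γ` on `P`.
-/

section Cardinality

open MeasureTheory

universe u

theorem mk_setOf_finite_subset_lt {α : Type u} {s : Set α} {κ : Cardinal.{u}} (hκ : ℵ₀ ≤ κ)
    (hs : #s < κ) : #{t : Set α | t.Finite ∧ t ⊆ s} < κ := by
  have hfinset : #(Finset s) < κ := by
    cases finite_or_infinite s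
    · exact (lt_aleph0_of_finite _).trans_le hκ
    · rwa [mk_finset_of_infinite]
  have hsub : {t : Set α | t.Finite ∧ t ⊆ s} ⊆
      Set.range fun t : Finset s => (Subtype.val '' (t : Set s) : Set α) := by
    rintro t ⟨ht, hts⟩
    lift t to Set s using hts
    exact ⟨(ht.of_finite_image Subtype.val_injective.injOn).toFinset, by simp⟩
  exact ((mk_le_mk_of_subset hsub).trans mk_range_le).trans_lt hfinset

theorem mk_generateSetAlgebra_lt {α : Type u} {s : Set (Set α)} {κ : Cardinal.{u}} (hκ : ℵ₀ ≤ κ)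
    (hs : #s < κ) : #(generateSetAlgebra s) < κ := by
  let literals : Set (Set α) := s ∪ compl '' s
  have hliterals : #literals < κ :=
    (mk_union_le _ _).trans_lt (add_lt_of_lt hκ hs (mk_image_le.trans_lt hs))
  have hnormalForm : generateSetAlgebra s ⊆ (fun A => ⋃ a ∈ A, ⋂ t ∈ a, t) ''
      {A | A.Finite ∧ A ⊆ {a : Set (Set α) | a.Finite ∧ a ⊆ literals}} := by
    intro B hB
    obtain ⟨A, hA, hAfin, hAs, rfl⟩ := mem_generateSetAlgebra_elim hB
    exact ⟨A, ⟨hA, fun a ha => ⟨hAfin a ha, fun t ht =>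
      (hAs a ha t ht).imp id fun htc => ⟨tᶜ, htc, compl_compl t⟩⟩⟩, rfl⟩
  exact ((mk_le_mk_of_subset hnormalForm).trans mk_image_le).trans_lt
    (mk_setOf_finite_subset_lt hκ (mk_setOf_finite_subset_lt hκ hliterals))

theorem exists_isChain_mk_lt_sUnion_eq {α : Type u} (s : Set α) {κ : Cardinal.{u}} (hκ : ℵ₀ ≤ κ)
    (hs : #s ≤ κ) :
    ∃ 𝒯 : Set (Set α), IsChain (· ⊆ ·) 𝒯 ∧ (∀ t ∈ 𝒯, #t < κ) ∧ ⋃₀ 𝒯 = s := by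
  obtain ⟨e⟩ : Nonempty (s ↪ κ.ord.ToType) := by rwa [← Cardinal.le_def, mk_ord_toType]
  have hmono : Monotone fun i => (Subtype.val '' (e ⁻¹' Set.Iic i) : Set α) := fun i j hij =>
    Set.image_mono (Set.preimage_mono (Set.Iic_subset_Iic.2 hij))
  refine ⟨_, hmono.isChain_range, ?_, Set.Subset.antisymm ?_ fun x hx => ?_⟩
  · rintro _ ⟨i, rfl⟩
    calc #(Subtype.val '' (e ⁻¹' Set.Iic i)) ≤ #(e ⁻¹' Set.Iic i) := mk_image_le
      _ ≤ #(Set.Iic i) := mk_preimage_of_injective _ _ e.injective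
      _ < #κ.ord.ToType := mk_Iic_lt i (by simp) (by simpa using hκ)
      _ = κ := mk_ord_toType κ
  · rintro x ⟨_, ⟨i, rfl⟩, ⟨y, -, rfl⟩⟩
    exact y.2
  · exact ⟨_, ⟨e ⟨x, hx⟩, rfl⟩, ⟨x, hx⟩, Set.mem_preimage.2 Set.self_mem_Iic, rfl⟩

theorem exists_isChain_isSetAlgebra_mk_lt_sUnion_eq {α : Type u} {F : Set (Set α)}
    (hF : IsSetAlgebra F) {κ : Cardinal.{u}} (hκ : ℵ₀ ≤ κ) (hcard : #F ≤ κ) :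
    ∃ 𝒮 : Set (Set (Set α)), IsChain (· ⊆ ·) 𝒮 ∧ (∀ S ∈ 𝒮, IsSetAlgebra S) ∧
      (∀ S ∈ 𝒮, #S < κ) ∧ ⋃₀ 𝒮 = F := by
  obtain ⟨𝒯, hchain, hmk, hcover⟩ := exists_isChain_mk_lt_sUnion_eq F hκ hcard
  refine ⟨generateSetAlgebra '' 𝒯,
    hchain.image_of_map_rel _ _ _ fun _ _ hST => generateSetAlgebra_mono hST, ?_, ?_,
    Set.Subset.antisymm ?_ ?_⟩
  · rintro _ ⟨T, -, rfl⟩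
    exact isSetAlgebra_generateSetAlgebra
  · rintro _ ⟨T, hT, rfl⟩
    exact mk_generateSetAlgebra_lt hκ (hmk T hT)
  · rintro A ⟨_, ⟨T, hT, rfl⟩, hA⟩
    exact hF.generateSetAlgebra_subset (hcover ▸ Set.subset_sUnion_of_mem hT) hA
  · rw [← hcover]
    rintro A ⟨T, hT, hA⟩
    exact ⟨_, ⟨T, hT, rfl⟩, self_subset_generateSetAlgebra hA⟩

theorem mk_iUnion_lt_of_mk_lt_cof {α ι : Type u} {κ : Cardinal.{u}} (hκ : ℵ₀ ≤ κ)
    (hι : #ι < κ.ord.cof) {s : ι → Set α} (hs : ∀ i, #(s i) < κ) : #(⋃ i, s i) < κ :=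
  (mk_iUnion_le s).trans_lt
    (mul_lt_of_lt hκ (hι.trans_le (Ordinal.cof_ord_le κ)) (iSup_lt_of_lt_cof_ord hι hs))

end Cardinality

section Extension

open MeasureTheory Filter Topology

variable {Ω : Type*} {F G : Set (Set Ω)}

theorem IsSetAlg.isSetAlgebra (hF : IsSetAlg F) : IsSetAlgebra F :=
  ⟨hF.1, hF.2.1, fun A B hA hB => hF.2.2 A hA B hB⟩

theorem VectMeas.mono {X : Type*} [AddCommGroup X] {m : Set Ω → X} (hm : VectMeas F m)
    (hGF : G ⊆ F) : VectMeas G m :=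
  fun A hA B hB => hm A (hGF hA) B (hGF hB)

theorem isSetAlgebra_sUnion_of_directedOn {𝒮 : Set (Set (Set Ω))} (hne : 𝒮.Nonempty)
    (hdir : DirectedOn (· ⊆ ·) 𝒮) (h𝒮 : ∀ S ∈ 𝒮, IsSetAlgebra S) : IsSetAlgebra (⋃₀ 𝒮) where
  empty_mem := hne.imp fun S hS => ⟨hS, (h𝒮 S hS).empty_mem⟩
  compl_mem := fun _ ⟨S, hS, hA⟩ => ⟨S, hS, (h𝒮 S hS).compl_mem hA⟩
  union_mem := by
    rintro A B ⟨S, hS, hA⟩ ⟨T, hT, hB⟩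
    obtain ⟨U, hU, hSU, hTU⟩ := hdir S hS T hT
    exact ⟨U, hU, (h𝒮 U hU).union_mem (hSU hA) (hTU hB)⟩

theorem preimage_mem_of_finite {ι : Type*} [Finite ι] (hG : IsSetAlgebra G) {f : Ω → ι → Prop}
    (hf : ∀ i, {x | f x i} ∈ G) (S : Set (ι → Prop)) : f ⁻¹' S ∈ G := by
  classical
  have := Fintype.ofFinite ι
  have hatom (u : ι → Prop) : f ⁻¹' {u} ∈ G := by
    have hinter : f ⁻¹' {u} = ⋂ i ∈ Finset.univ, {x | f x i ↔ u i} := by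
      ext x
      simp [funext_iff]
    rw [hinter]
    refine hG.biInter_mem _ fun i _ => ?_
    by_cases hu : u i
    · simpa only [hu, iff_true] using hf i
    · simpa only [hu, iff_false, Set.compl_ofPred] using hG.compl_mem (hf i)
  have hunion : f ⁻¹' S = ⋃ u ∈ S.toFinite.toFinset, f ⁻¹' {u} := by
    ext x
    simp
  rw [hunion]
  exact hG.biUnion_mem _ fun u _ => hatom u

theorem exists_preimage_mem_and_preimage_eq (hG : IsSetAlgebra G) {P : Set (Set Ω)}
    (hP : P.Finite) (hPG : P ⊆ G) :
    ∃ r : Ω → Ω, (∀ A, r ⁻¹' A ∈ G) ∧ ∀ A ∈ P, r ⁻¹' A = A := by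
  cases isEmpty_or_nonempty Ω
  · exact ⟨id, fun A => A.eq_empty_of_isEmpty ▸ hG.empty_mem, fun _ _ => rfl⟩
  have := hP.to_subtype
  let atom : Ω → P → Prop := fun x A => x ∈ A.1
  have hatom (x : Ω) : atom (Function.invFun atom (atom x)) = atom x :=
    Function.invFun_eq ⟨x, rfl⟩
  refine ⟨Function.invFun atom ∘ atom, fun A => ?_, fun A hA => Set.ext fun x => ?_⟩
  · exact preimage_mem_of_finite hG (fun A => hPG A.2) (Function.invFun atom ⁻¹' A)
  · exact iff_of_eq (congrFun (hatom x) ⟨A, hA⟩)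

theorem VectMeas.exists_extension_mem_of_isCompact {X : Type*} [AddCommGroup X]
    [TopologicalSpace X] [ContinuousAdd X] [T2Space X] (hG : IsSetAlgebra G) {m : Set Ω → X}
    (hm : VectMeas G m) {C : Set X} (hC : IsCompact C) (hmC : ∀ A ∈ G, m A ∈ C) :
    ∃ l : Set Ω → X, VectMeas Set.univ l ∧ (∀ A, l A ∈ C) ∧ Set.EqOn l m G := by
  choose r hrG hrP using fun P : Finset G => exists_preimage_mem_and_preimage_eq hG
    (P.finite_toSet.image Subtype.val) (Subtype.coe_image_subset G P)
  let U : Ultrafilter (Finset G) := Ultrafilter.of atTop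
  have hlim (A : Set Ω) : ∃ c ∈ C, Tendsto (fun P => m (r P ⁻¹' A)) U (𝓝 c) :=
    hC.ultrafilter_le_nhds (U.map fun P => m (r P ⁻¹' A))
      (tendsto_principal.2 (Eventually.of_forall fun P => hmC _ (hrG P A)))
  choose l hlC hl using hlim
  refine ⟨l, fun A _ B _ hAB => ?_, hlC, fun A hA => ?_⟩
  · refine tendsto_nhds_unique (hl (A ∪ B)) (((hl A).add (hl B)).congr fun P => ?_)
    rw [Set.preimage_union, hm _ (hrG P A) _ (hrG P B) (hAB.preimage _)]
  · have heventually : ∀ᶠ P in (U : Filter (Finset G)), m A = m (r P ⁻¹' A) := by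
      filter_upwards [Ultrafilter.of_le atTop (mem_atTop {⟨A, hA⟩})] with P hP
      rw [hrP P A ⟨⟨A, hA⟩, hP (Finset.mem_singleton_self _), rfl⟩]
    exact tendsto_nhds_unique (hl A) (tendsto_const_nhds.congr' heventually)

variable {E : Type*} [NormedAddCommGroup E] [ProperSpace E] {n m : Set Ω → E} {K δ : ℝ}

theorem VectMeas.exists_norm_sub_le_and_eq_zero (hm : VectMeas F m)
    (hnm : ∀ A ∈ F, ‖n A - m A‖ ≤ K) (hG : IsSetAlgebra G) (hGF : G ⊆ F)
    (hn : ∀ A ∈ G, ‖n A‖ ≤ δ) :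
    ∃ m' : Set Ω → E, VectMeas F m' ∧ (∀ A ∈ F, ‖n A - m' A‖ ≤ 2 * K + δ) ∧
      ∀ A ∈ G, m' A = 0 := by
  have hmG : ∀ A ∈ G, m A ∈ Metric.closedBall 0 (K + δ) := fun A hA => by
    have := norm_le_norm_add_norm_sub (n A) (m A)
    rw [mem_closedBall_zero_iff]
    linarith [hnm A (hGF hA), hn A hA]
  obtain ⟨l, hl, hlK, hlm⟩ :=
    (hm.mono hGF).exists_extension_mem_of_isCompact hG (isCompact_closedBall 0 (K + δ)) hmG
  refine ⟨m - l, fun A hA B hB hAB => ?_, fun A hA => ?_, fun A hA => ?_⟩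
  · simp only [Pi.sub_apply, hm A hA B hB hAB, hl A trivial B trivial hAB, add_sub_add_comm]
  · calc ‖n A - (m A - l A)‖ = ‖n A - m A + l A‖ := by rw [sub_sub_eq_add_sub, sub_add_eq_add_sub]
      _ ≤ ‖n A - m A‖ + ‖l A‖ := norm_add_le _ _
      _ ≤ K + (K + δ) := add_le_add (hnm A hA) (mem_closedBall_zero_iff.1 (hlK A))
      _ = 2 * K + δ := by ring
  · exact sub_eq_zero.2 (hlm hA).symm

theorem VectMeas.exists_norm_sub_le_and_eq_zero_of_isChain (hm : VectMeas F m)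
    (hnm : ∀ A ∈ F, ‖n A - m A‖ ≤ K) {𝒮 : Set (Set (Set Ω))} (hchain : IsChain (· ⊆ ·) 𝒮)
    (h𝒮 : ∀ S ∈ 𝒮, IsSetAlgebra S) (h𝒮F : ⋃₀ 𝒮 ⊆ F) (hδ : 0 ≤ δ) :
    ∃ m' : Set Ω → E, VectMeas F m' ∧ (∀ A ∈ F, ‖n A - m' A‖ ≤ 2 * K + δ) ∧
      ∀ S ∈ 𝒮, (∀ C ∈ S, ‖n C‖ ≤ δ) → ∀ A ∈ S, m' A = 0 := by
  let small : Set (Set (Set Ω)) := {S ∈ 𝒮 | ∀ C ∈ S, ‖n C‖ ≤ δ}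
  have hsmall : small ⊆ 𝒮 := Set.sep_subset 𝒮 _
  rcases small.eq_empty_or_nonempty with hempty | hne
  · refine ⟨m, hm, fun A hA => ?_, fun S hS hSδ => (hempty.subset ⟨hS, hSδ⟩).elim⟩
    linarith [hnm A hA, norm_nonneg (n A - m A)]
  have hG : IsSetAlgebra (⋃₀ small) :=
    isSetAlgebra_sUnion_of_directedOn hne (hchain.mono hsmall).directedOn
      fun S hS => h𝒮 S (hsmall hS)
  obtain ⟨m', hm', hnm', hzero⟩ := hm.exists_norm_sub_le_and_eq_zero hnm hG
    ((Set.sUnion_mono hsmall).trans h𝒮F) fun A ⟨_, hS, hA⟩ => hS.2 A hA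
  exact ⟨m', hm', hnm', fun S hS hSδ A hA => hzero A ⟨S, ⟨hS, hSδ⟩, hA⟩⟩

end Extension

section Coordinates

variable {Ω Γ : Type*} {E : Γ → Type*} [∀ γ, NormedAddCommGroup (E γ)] {F : Set (Set Ω)}

theorem OneAdd.lp_apply {p : ℝ≥0∞} [Fact (1 ≤ p)] {ν : Set Ω → lp E p} (hν : OneAdd F ν) (γ : Γ) :
    OneAdd F fun A => ν A γ := fun A hA B hB hAB =>
  (lp.norm_apply_le_norm (zero_lt_one.trans_le Fact.out).ne' (ν (A ∪ B) - ν A - ν B) γ).trans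
    (hν A hA B hB hAB)

theorem exists_vectMeas_of_forall_apply [Nonempty Γ] [∀ γ, NormedSpace ℝ (E γ)] (hF : IsSetAlg F)
    {X : Submodule ℝ (lp E ∞)} {ν : Set Ω → X} {m : ∀ γ, Set Ω → E γ} {v : ℝ}
    (hm : ∀ γ, VectMeas F (m γ)) (hνm : ∀ γ, ∀ A ∈ F, ‖(ν A).1 γ - m γ A‖ ≤ v)
    (hX : ∀ A ∈ F, ∀ x : lp E ∞, (∀ γ, x γ = m γ A) → x ∈ X) :
    ∃ μ : Set Ω → X, VectMeas F μ ∧ ∀ A ∈ F, ‖ν A - μ A‖ ≤ v := by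
  have hmem : ∀ A ∈ F, Memℓp (fun γ => m γ A) ∞ := by
    refine fun A hA => memℓp_infty ⟨‖(ν A).1‖ + v, ?_⟩
    rintro _ ⟨γ, rfl⟩
    calc ‖m γ A‖ ≤ ‖(ν A).1 γ‖ + ‖(ν A).1 γ - m γ A‖ := norm_le_norm_add_norm_sub _ _
      _ ≤ ‖(ν A).1‖ + v :=
        add_le_add (lp.norm_apply_le_norm top_ne_zero (ν A).1 γ) (hνm γ A hA)
  have hcoord (A : Set Ω) : ∃ x : X, A ∈ F → ∀ γ, x.1 γ = m γ A := by
    by_cases hA : A ∈ F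
    · exact ⟨⟨⟨_, hmem A hA⟩, hX A hA _ fun _ => rfl⟩, fun _ _ => rfl⟩
    · exact ⟨0, fun h => (hA h).elim⟩
  choose μ hμ using hcoord
  refine ⟨μ, fun A hA B hB hAB => ?_, fun A hA => lp.norm_le_of_forall_le' v fun γ => ?_⟩
  · refine Subtype.ext (lp.ext (funext fun γ => ?_))
    calc (μ (A ∪ B)).1 γ = m γ A + m γ B := by
          rw [hμ _ (hF.2.2 A hA B hB), hm γ A hA B hB hAB]
      _ = (μ A + μ B).1 γ := by rw [← hμ A hA, ← hμ B hB]; rfl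
  · have := hνm γ A hA
    rwa [← hμ A hA] at this

end Coordinates

section MZero

variable {Γ : Type}

theorem mem_mZero_of_mk_support_lt {x : lp (fun _ : Γ => ℝ) ∞}
    (hx : #(Function.support x) < #Γ) : x ∈ mZero Γ :=
  Submodule.subset_span fun _ hε => (mk_le_mk_of_subset fun _ hγ =>
    abs_pos.1 (hε.trans_le hγ)).trans_lt hx

theorem mem_mZero_iff [Infinite Γ] {x : lp (fun _ : Γ => ℝ) ∞} :
    x ∈ mZero Γ ↔ ∀ ε : ℝ, 0 < ε → #{γ : Γ | ε ≤ |x γ|} < #Γ := by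
  refine ⟨fun hx => ?_, fun hx => Submodule.subset_span hx⟩
  induction hx using Submodule.span_induction with
  | mem _ hx => exact hx
  | zero =>
    intro ε hε
    have hempty : {γ : Γ | ε ≤ |(0 : lp (fun _ : Γ => ℝ) ∞) γ|} = ∅ := by
      ext γ
      simp [hε]
    rw [hempty, mk_eq_zero]
    exact pos_iff_ne_zero.2 (mk_ne_zero Γ)
  | add x y _ _ hx hy =>
    intro ε hε
    have hsub : {γ | ε ≤ |(x + y) γ|} ⊆ {γ | ε / 2 ≤ |x γ|} ∪ {γ | ε / 2 ≤ |y γ|} := by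
      intro γ (hγ : ε ≤ |x γ + y γ|)
      by_contra! hlt
      simp only [Set.mem_union, Set.mem_ofPred_eq, not_or, not_le] at hlt
      linarith [abs_add_le (x γ) (y γ)]
    exact ((mk_le_mk_of_subset hsub).trans (mk_union_le _ _)).trans_lt
      (add_lt_of_lt (aleph0_le_mk Γ) (hx _ (half_pos hε)) (hy _ (half_pos hε)))
  | smul c x _ hx =>
    intro ε hε
    have hsub : {γ | ε ≤ |(c • x) γ|} ⊆ {γ | ε / (|c| + 1) ≤ |x γ|} := by
      intro γ (hγ : ε ≤ |c * x γ|)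
      rw [abs_mul] at hγ
      rw [Set.mem_ofPred_eq, div_le_iff₀ (by positivity)]
      linarith [abs_nonneg (x γ)]
    exact (mk_le_mk_of_subset hsub).trans_lt (hx _ (by positivity))

end MZero

theorem IsKRConst.nonneg {K : ℝ} (hK : IsKRConst K) : 0 ≤ K := by
  obtain ⟨μ, -, hμ⟩ := hK Unit Set.univ ⟨trivial, fun _ _ => trivial, fun _ _ _ _ => trivial⟩ 0
    (by simp [OneAdd])
  exact (abs_nonneg _).trans (hμ ∅ trivial)

theorem stmt_12_general {K : ℝ} (hK : IsKRConst K) (Γ : Type) [Infinite Γ] {v : ℝ}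
    (hv : 2 * K < v) : HasKappaSVMBound (mZero Γ) (Order.succ (#Γ).ord.cof) v := by
  intro Ω F hF hcard ν hν
  have hΓ : ℵ₀ ≤ #Γ := aleph0_le_mk Γ
  have hcof : ℵ₀ ≤ (#Γ).ord.cof :=
    Ordinal.aleph0_le_cof_iff.2 (Ordinal.one_lt_cof_iff.2 (isSuccLimit_ord hΓ))
  obtain ⟨𝒮, hchain, h𝒮, hmk, hcover⟩ :=
    exists_isChain_isSetAlgebra_mk_lt_sUnion_eq hF.isSetAlgebra hcof (Order.lt_succ_iff.1 hcard)
  have hδ : 0 < v - 2 * K := sub_pos.2 hv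
  have hcoord (γ : Γ) : OneAdd F fun A => (ν A).1 γ := OneAdd.lp_apply (ν := fun A => (ν A).1) hν γ
  choose m₀ hm₀ hνm₀ using fun γ => hK Ω F hF _ (hcoord γ)
  choose m hm hνm hzero using fun γ =>
    (hm₀ γ).exists_norm_sub_le_and_eq_zero_of_isChain (hνm₀ γ) hchain h𝒮 hcover.le hδ.le
  simp only [add_sub_cancel] at hνm
  refine exists_vectMeas_of_forall_apply hF hm hνm fun A hA x hx => ?_
  obtain ⟨S, hS, hAS⟩ : ∃ S ∈ 𝒮, A ∈ S := hcover.ge hA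
  have hsupport : Function.support x ⊆ ⋃ C : S, {γ | v - 2 * K ≤ |(ν C).1 γ|} := by
    intro γ hγ
    contrapose! hγ
    simp only [Set.mem_iUnion, Set.mem_ofPred_eq, not_exists, not_le] at hγ
    simpa [hx] using hzero γ S hS (fun C hC => (hγ ⟨C, hC⟩).le) A hAS
  exact mem_mZero_of_mk_support_lt ((mk_le_mk_of_subset hsupport).trans_lt
    (mk_iUnion_lt_of_mk_lt_cof hΓ (hmk S hS) fun C => mem_mZero_iff.1 (ν C).2 _ hδ))

/-- for an infinite cardinal Γ, m₀(Γ) has the cf(Γ)⁺-SVM property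
with any constant v > 16K, where K is a Kalton–Roberts constant. -/
theorem stmt_12 (K : ℝ) (hK : IsKRConst K) (Γ : Type) [Infinite Γ]
    (v : ℝ) (hv : 16 * K < v)
    (Ω : Type) (F : Set (Set Ω)) (hF : IsSetAlg F)
    (hcard : #(↥F) ≤ ((#Γ).ord).cof)
    (ν : Set Ω → ↥(mZero Γ)) (hν : OneAdd F ν) :
    ∃ μ : Set Ω → ↥(mZero Γ), VectMeas F μ ∧ ∀ A ∈ F, ‖ν A - μ A‖ ≤ v := by
  have h2K : 2 * K < v := by linarith [hK.nonneg]
  exact stmt_12_general hK Γ h2K Ω F hF (Order.lt_succ_iff.2 hcard) ν hν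
end
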